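/- There exist constants C < ∞ and δ > 0, depending only on d, such that for any Lebesgue measurable sets E, E* ⊆ ℝ^d of positive finite measure, 𝒯(E, E*) ≤ C |E|^{d/(d+1)} |E*|^{d/(d+1)} · sup_ℬ ( (|E ∩ π(ℬ)|/|E|) · (|E* ∩ π*(ℬ)|/|E*|) )^δ, where the supremum is taken over all balls ℬ = ℬ(z̄, e, r, r*) satisfying |π(ℬ)| ≤ |E| and |π*(ℬ)| ≤ |E*|. -/

import Mathlib

open MeasureTheory ENNReal
open scoped RealInnerProductSpace

noncomputable section

/-- `ℝ^{d-1}` -/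
abbrev Vec (n : ℕ) : Type := EuclideanSpace ℝ (Fin n)

/-- `ℝ^d = ℝ^{d-1} × ℝ`, a point `x = (x', x_d)` -/
abbrev Pt (n : ℕ) : Type := Vec n × ℝ

/-- The Radon-like transform `Tf(x) = ∫_{ℝ^{d-1}} f(x' - t, x_d - |t|²) dt`. -/
def radonT (n : ℕ) (f : Pt n → ℝ≥0∞) (x : Pt n) : ℝ≥0∞ :=
  ∫⁻ t : Vec n, f (x.1 - t, x.2 - ‖t‖ ^ 2)

/-- The incidence functional `𝒯(E, E*) = ∫_E T(χ_{E*})`. -/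
def incT (n : ℕ) (E Estar : Set (Pt n)) : ℝ≥0∞ :=
  ∫⁻ x in E, radonT n (Estar.indicator 1) x

/-- Admissibility of the parameters of a ball `ℬ(z̄, e, r, r*)`:
the center `z̄ = (x̄, x̄*)` lies on the incidence manifold `ℐ`, `ρ > 0`,
`e` is an orthonormal basis of `ℝ^{d-1}`, and `r_j r*_j = ρ > 0` for all `j`. -/
def IsBallParams (n : ℕ) (zb : Pt n × Pt n) (e : Fin n → Vec n)
    (r rs : Fin n → ℝ) (ρ : ℝ) : Prop :=
  zb.2.2 = zb.1.2 - ‖zb.2.1 - zb.1.1‖ ^ 2 ∧ 0 < ρ ∧ Orthonormal ℝ e ∧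
    (∀ j, 0 < r j) ∧ (∀ j, 0 < rs j) ∧ (∀ j, r j * rs j = ρ)

/-- The ball `ℬ(z̄, e, r, r*)`, a subset of the incidence manifold
`ℐ = {(x,y) : y_d = x_d - |y' - x'|²} ⊆ ℝ^d × ℝ^d`. -/
def ballI (n : ℕ) (zb : Pt n × Pt n) (e : Fin n → Vec n)
    (r rs : Fin n → ℝ) (ρ : ℝ) : Set (Pt n × Pt n) :=
  fun z => z.2.2 = z.1.2 - ‖z.2.1 - z.1.1‖ ^ 2 ∧
    (∀ j, |⟪z.1.1 - zb.1.1, e j⟫| < r j) ∧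
    |z.1.2 - zb.2.2 - ‖z.1.1 - zb.2.1‖ ^ 2| < ρ ∧
    (∀ j, |⟪z.2.1 - zb.2.1, e j⟫| < rs j) ∧
    |z.2.2 - zb.1.2 + ‖z.2.1 - zb.1.1‖ ^ 2| < ρ


/-- sections along (signed) paraboloids -/
def psec {n : ℕ} (s : ℝ) (G : Set (Pt n)) (z : Pt n) : Set (Vec n) :=
  {w | (w, z.2 + s * ‖w - z.1‖ ^ 2) ∈ G}

lemma measurableSet_psec_joint {n : ℕ} (s : ℝ) {G : Set (Pt n)} (hG : MeasurableSet G) :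
    MeasurableSet {p : Pt n × Vec n | p.2 ∈ psec s G p.1} := by
  have : Measurable (fun p : Pt n × Vec n => (p.2, p.1.2 + s * ‖p.2 - p.1.1‖ ^ 2)) := by
    fun_prop
  exact this hG

lemma measurableSet_psec {n : ℕ} (s : ℝ) {G : Set (Pt n)} (hG : MeasurableSet G) (z : Pt n) :
    MeasurableSet (psec s G z) := by
  have : Measurable (fun w : Vec n => (w, z.2 + s * ‖w - z.1‖ ^ 2)) := by fun_prop
  exact this hG

lemma measurable_vol_psec {n : ℕ} (s : ℝ) {G : Set (Pt n)} (hG : MeasurableSet G) :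
    Measurable (fun z : Pt n => volume (psec s G z)) :=
  measurable_measure_prodMk_left (measurableSet_psec_joint s hG)

/-- incidence form -/
def Lam {n : ℕ} (E F : Set (Pt n)) : ℝ≥0∞ := ∫⁻ x in E, volume (psec (-1) F x)

lemma incT_eq_Lam {n : ℕ} (E : Set (Pt n)) {F : Set (Pt n)} (hF : MeasurableSet F) :
    incT n E F = Lam E F := by
  unfold incT Lam
  congr 1
  ext x
  unfold radonT
  rw [← lintegral_indicator_one (measurableSet_psec (-1) hF x)]
  rw [← lintegral_sub_left_eq_self (μ := volume) _ x.1]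
  refine lintegral_congr fun t => ?_
  have : (x.1 - (x.1 - t), x.2 - ‖x.1 - t‖ ^ 2) ∈ F ↔ t ∈ psec (-1) F x := by
    have h1 : x.2 - ‖x.1 - t‖ ^ 2 = x.2 + -1 * ‖t - x.1‖ ^ 2 := by
      rw [norm_sub_rev]; ring
    have h2 : x.1 - (x.1 - t) = t := by abel
    rw [h1, h2]; rfl
  by_cases h : t ∈ psec (-1) F x
  · rw [Set.indicator_of_mem h, Set.indicator_of_mem (this.2 h)]; rfl
  · rw [Set.indicator_of_notMem h, Set.indicator_of_notMem (fun h' => h (this.1 h'))]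

lemma Lam_eq_swap {n : ℕ} {E F : Set (Pt n)} (hE : MeasurableSet E) (hF : MeasurableSet F) :
    Lam E F = ∫⁻ y in F, volume (psec 1 E y) := by
  have key : ∀ (s : ℝ) (A B : Set (Pt n)), MeasurableSet A → MeasurableSet B →
      ∫⁻ x in A, volume (psec s B x) = ∫⁻ x' : Vec n, ∫⁻ y' : Vec n, ∫⁻ t : ℝ,
        A.indicator 1 (x', t) * B.indicator 1 (y', t + s * ‖y' - x'‖ ^ 2) := by
    intro s A B hA hB
    have hm : Measurable (fun p : Pt n × Vec n => A.indicator (1 : Pt n → ℝ≥0∞) p.1 *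
        B.indicator 1 (p.2, p.1.2 + s * ‖p.2 - p.1.1‖ ^ 2)) := by
      refine Measurable.mul ?_ ?_
      · exact (measurable_one.indicator hA).comp measurable_fst
      · exact (measurable_one.indicator hB).comp (by fun_prop)
    rw [← lintegral_indicator hA]
    have h1 : ∀ x : Pt n, A.indicator (fun x => volume (psec s B x)) x =
        ∫⁻ y' : Vec n, A.indicator 1 x * B.indicator 1 (y', x.2 + s * ‖y' - x.1‖ ^ 2) := by
      intro x
      have h2 : ∀ y' : Vec n, B.indicator (1 : Pt n → ℝ≥0∞) (y', x.2 + s * ‖y' - x.1‖ ^ 2) =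
        (psec s B x).indicator 1 y' := fun y' => rfl
      simp_rw [h2]
      rw [lintegral_const_mul _ (measurable_one.indicator (measurableSet_psec s hB x)),
        lintegral_indicator_one (measurableSet_psec s hB x)]
      by_cases hx : x ∈ A <;> simp [hx]
    simp_rw [h1]
    rw [Measure.volume_eq_prod, lintegral_prod _ hm.lintegral_prod_right'.aemeasurable]
    refine lintegral_congr fun x' => ?_
    rw [lintegral_lintegral_swap]
    refine Measurable.aemeasurable ?_
    exact hm.comp (by fun_prop : Measurable (fun q : ℝ × Vec n => (((x', q.1), q.2) : Pt n × Vec n)))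
  unfold Lam
  rw [key _ _ _ hE hF, key _ _ _ hF hE, lintegral_lintegral_swap]
  · refine lintegral_congr fun y' => lintegral_congr fun x' => ?_
    rw [← lintegral_add_right_eq_self (μ := volume) _ (‖x' - y'‖ ^ 2)]
    refine lintegral_congr fun t => ?_
    rw [mul_comm, norm_sub_rev y' x']
    simp
  · refine Measurable.aemeasurable ?_
    refine Measurable.lintegral_prod_right' (f := fun q : (Vec n × Vec n) × ℝ =>
      E.indicator (1 : Pt n → ℝ≥0∞) (q.1.1, q.2) *
        F.indicator 1 (q.1.2, q.2 + -1 * ‖q.1.2 - q.1.1‖ ^ 2)) ?_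
    refine Measurable.mul ?_ ?_
    · exact (measurable_one.indicator hE).comp (by fun_prop)
    · exact (measurable_one.indicator hF).comp (by fun_prop)

/-- refinement lemma -/
lemma refine_set {Ω : Type*} [MeasurableSpace Ω] {μ : Measure Ω} {f : Ω → ℝ≥0∞} (hf : Measurable f)
    {A : Set Ω} {a L : ℝ} (ha : 0 < a) (hL : 0 ≤ L)
    (hAa : μ A ≤ ENNReal.ofReal a) (h : ENNReal.ofReal L ≤ ∫⁻ x in A, f x ∂μ) :
    ENNReal.ofReal (L / 2) ≤ ∫⁻ x in A ∩ {x | ENNReal.ofReal (L / (2 * a)) ≤ f x}, f x ∂μ := by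
  set S := {x | ENNReal.ofReal (L / (2 * a)) ≤ f x}
  have hS : MeasurableSet S := measurableSet_le measurable_const hf
  have h1 := lintegral_inter_add_sdiff f A hS (μ := μ)
  have h2 : ∫⁻ x in A \ S, f x ∂μ ≤ ENNReal.ofReal (L / 2) := by
    calc ∫⁻ x in A \ S, f x ∂μ ≤ ∫⁻ x in A \ S, ENNReal.ofReal (L / (2 * a)) ∂μ := by
          refine setLIntegral_mono measurable_const fun x hx => ?_
          exact (not_le.1 hx.2).le
      _ = ENNReal.ofReal (L / (2 * a)) * μ (A \ S) := by simp
      _ ≤ ENNReal.ofReal (L / (2 * a)) * ENNReal.ofReal a := by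
          gcongr; exact (measure_mono Set.sdiff_subset).trans hAa
      _ = ENNReal.ofReal (L / 2) := by
          rw [← ENNReal.ofReal_mul (by positivity)]; congr 1; field_simp
  have h3 : ENNReal.ofReal (L / 2) + ENNReal.ofReal (L / 2) ≤
      (∫⁻ x in A ∩ S, f x ∂μ) + ENNReal.ofReal (L / 2) := by
    rw [← ENNReal.ofReal_add (by positivity) (by positivity), add_halves]
    refine h.trans ?_
    rw [← h1]
    gcongr
  exact (ENNReal.add_le_add_iff_right ENNReal.ofReal_ne_top).1 h3


/-- closed box in an orthonormal basis -/
def obox {n : ℕ} (e : OrthonormalBasis (Fin n) ℝ (Vec n)) (c : Vec n) (r : Fin n → ℝ) :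
    Set (Vec n) := {y | ∀ j, |⟪y - c, e j⟫| ≤ r j}

/-- coordinates -/
def ocoord {n : ℕ} (e : OrthonormalBasis (Fin n) ℝ (Vec n)) (y : Vec n) : Fin n → ℝ :=
  fun j => ⟪y, e j⟫

lemma ocoord_mp {n : ℕ} (e : OrthonormalBasis (Fin n) ℝ (Vec n)) :
    MeasurePreserving (ocoord e) := by
  have h := (PiLp.volume_preserving_ofLp (Fin n)).comp e.measurePreserving_repr
  have h2 : ocoord e = WithLp.ofLp ∘ ⇑e.repr := by
    funext y j
    simp [ocoord, e.repr_apply_apply, real_inner_comm]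
  rw [h2]; exact h

lemma inner_ocoord {n : ℕ} (e : OrthonormalBasis (Fin n) ℝ (Vec n)) (y w : Vec n) :
    ⟪y, w⟫ = ∑ i, ocoord e y i * ocoord e w i := by
  rw [← e.sum_inner_mul_inner y w]
  simp [ocoord, real_inner_comm]

lemma measurableSet_obox {n : ℕ} (e : OrthonormalBasis (Fin n) ℝ (Vec n)) (c : Vec n)
    (r : Fin n → ℝ) : MeasurableSet (obox e c r) := by
  unfold obox
  rw [Set.ofPred_forall]
  refine MeasurableSet.iInter fun j => ?_
  exact measurableSet_le (by fun_prop) measurable_const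

lemma obox_eq_preimage {n : ℕ} (e : OrthonormalBasis (Fin n) ℝ (Vec n)) (c : Vec n)
    (r : Fin n → ℝ) : obox e c r = ocoord e ⁻¹'
      (Set.univ.pi fun j => Set.Icc (ocoord e c j - r j) (ocoord e c j + r j)) := by
  ext y
  simp only [obox, Set.mem_ofPred_eq, Set.mem_preimage, Set.mem_univ_pi, Set.mem_Icc, ocoord,
    inner_sub_left, abs_le]
  refine forall_congr' fun j => ?_
  constructor <;> rintro ⟨h1, h2⟩ <;> constructor <;> linarith

lemma volume_obox {n : ℕ} (e : OrthonormalBasis (Fin n) ℝ (Vec n)) (c : Vec n)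
    (r : Fin n → ℝ) (hr : ∀ j, 0 ≤ r j) :
    volume (obox e c r) = ENNReal.ofReal (∏ j, (2 * r j)) := by
  rw [obox_eq_preimage, (ocoord_mp e).measure_preimage
    (MeasurableSet.univ_pi fun j => measurableSet_Icc).nullMeasurableSet, volume_pi_pi,
    ENNReal.ofReal_prod_of_nonneg]
  · refine Finset.prod_congr rfl fun j _ => ?_
    rw [Real.volume_Icc]; congr 1; ring
  · intro j _; have := hr j; linarith

lemma lintegral_affine (H : ℝ → ℝ≥0∞) (hH : Measurable H) (κ a : ℝ) (ha : a ≠ 0) :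
    ∫⁻ t : ℝ, H (κ + a * t) = ENNReal.ofReal |a⁻¹| * ∫⁻ t, H t := by
  have h1 : ∫⁻ t : ℝ, H (κ + a * t) = ∫⁻ t, H (κ + t) ∂(Measure.map (a * ·) volume) := by
    rw [lintegral_map (by fun_prop) (by fun_prop)]
  rw [h1, Real.map_volume_mul_left ha, lintegral_smul_measure,
    lintegral_add_left_eq_self (μ := volume) H κ]
  rfl

lemma slab_int {n : ℕ} (e : OrthonormalBasis (Fin n) ℝ (Vec n)) (c : Vec n)
    (r : Fin n → ℝ) (hr : ∀ j, 0 < r j) (j : Fin n) (w : Vec n) (lam : ℝ) (hlam : 0 < lam)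
    (hw : lam ≤ |⟪w, e j⟫|) (κ s : ℝ) (hs : |s| = 1) (H : ℝ → ℝ≥0∞) (hH : Measurable H) :
    ∫⁻ y in obox e c r, H (κ + s * (2 * ⟪y, w⟫)) ≤
      ENNReal.ofReal ((∏ i, (2 * r i)) / (4 * r j * lam)) * ∫⁻ t, H t := by
  obtain ⟨m, rfl⟩ : ∃ m, n = m + 1 := ⟨n - 1, by have := j.2; omega⟩
  set I : Fin (m + 1) → Set ℝ := fun j => Set.Icc (ocoord e c j - r j) (ocoord e c j + r j)
  have hI : MeasurableSet (Set.univ.pi I) := MeasurableSet.univ_pi fun j => measurableSet_Icc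
  set w' := ocoord e w
  have hwj : w' j ≠ 0 := by
    intro h
    have : ⟪w, e j⟫ = 0 := h
    rw [this] at hw; simp at hw; linarith
  have hs0 : s ≠ 0 := by rintro rfl; simp at hs
  set Φ : (Fin (m + 1) → ℝ) → ℝ≥0∞ := (Set.univ.pi I).indicator
    (fun z => H (κ + s * (2 * ∑ i, z i * w' i)))
  have hΦ : Measurable Φ := by
    refine Measurable.indicator ?_ hI
    exact hH.comp (by fun_prop)
  have e1 : ∫⁻ y in obox e c r, H (κ + s * (2 * ⟪y, w⟫)) = ∫⁻ z, Φ z := by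
    rw [← (ocoord_mp e).lintegral_comp hΦ, ← lintegral_indicator (measurableSet_obox e c r)]
    refine lintegral_congr fun y => ?_
    rw [obox_eq_preimage]
    simp only [Φ, Set.indicator, Set.mem_preimage, inner_ocoord e y w]
    rfl
  rw [e1, ← (volume_preserving_piFinSuccAbove (fun _ : Fin (m + 1) => ℝ) j).symm.lintegral_comp hΦ,
    Measure.volume_eq_prod, lintegral_prod_symm']
  swap
  · exact hΦ.comp (MeasurableEquiv.measurable _)
  set B : Set (Fin m → ℝ) := Set.univ.pi fun i => I (j.succAbove i)
  have hB : MeasurableSet B := MeasurableSet.univ_pi fun j => measurableSet_Icc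
  have eqj : ∀ (t : ℝ) (z' : Fin m → ℝ),
      (MeasurableEquiv.piFinSuccAbove (fun _ => ℝ) j).symm (t, z') j = t :=
    fun t z' => Fin.insertNth_apply_same (α := fun _ => ℝ) j t z'
  have eqs : ∀ (t : ℝ) (z' : Fin m → ℝ) (i : Fin m),
      (MeasurableEquiv.piFinSuccAbove (fun _ => ℝ) j).symm (t, z') (j.succAbove i) = z' i :=
    fun t z' i => Fin.insertNth_apply_succAbove (α := fun _ => ℝ) j t z' i
  have e2 : ∀ z' : Fin m → ℝ, ∫⁻ t : ℝ, Φ ((MeasurableEquiv.piFinSuccAbove (fun _ => ℝ) j).symm (t, z'))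
      ≤ B.indicator (fun _ => ENNReal.ofReal |(2 * s * w' j)⁻¹| * ∫⁻ t, H t) z' := by
    intro z'
    by_cases hz : z' ∈ B
    · rw [Set.indicator_of_mem hz]
      rw [← lintegral_affine H hH (κ + s * (2 * ∑ i, z' i * w' (j.succAbove i))) (2 * s * w' j)
        (by simp [hs0, hwj])]
      refine lintegral_mono fun t => ?_
      refine (Set.indicator_le_self' (fun _ _ => zero_le) _).trans ?_
      refine le_of_eq ?_
      congr 1
      rw [Fin.sum_univ_succAbove _ j]
      rw [eqj]
      simp_rw [eqs]
      ring
    · rw [Set.indicator_of_notMem hz]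
      refine le_of_eq ?_
      refine (lintegral_congr (g := fun _ => 0) fun t => ?_).trans lintegral_zero
      refine Set.indicator_of_notMem (fun h => hz ?_) _
      intro i _
      have := h (j.succAbove i) trivial
      rwa [eqs] at this
  refine (lintegral_mono e2).trans ?_
  rw [lintegral_indicator hB, setLIntegral_const, mul_right_comm]
  gcongr
  have hvB : volume B = ENNReal.ofReal (∏ i, (2 * r (j.succAbove i))) := by
    rw [volume_pi_pi, ENNReal.ofReal_prod_of_nonneg]
    · refine Finset.prod_congr rfl fun j _ => ?_
      rw [Real.volume_Icc]; congr 1; ring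
    · intro i _; have := hr (j.succAbove i); linarith
  rw [hvB, ← ENNReal.ofReal_mul (abs_nonneg _)]
  refine ENNReal.ofReal_le_ofReal ?_
  rw [Fin.prod_univ_succAbove _ j]
  have hP : 0 ≤ ∏ i, (2 * r (j.succAbove i)) := Finset.prod_nonneg fun i _ => by
    have := hr (j.succAbove i); linarith
  have hw2 : lam ≤ |w' j| := hw
  have hrj := hr j
  calc |(2 * s * w' j)⁻¹| * ∏ i, (2 * r (j.succAbove i)) 
      ≤ (2 * lam)⁻¹ * ∏ i, (2 * r (j.succAbove i)) := by
        gcongr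
        rw [abs_inv, abs_mul, abs_mul, hs]
        simp only [abs_two, mul_one]
        gcongr
    _ = _ := by field_simp; ring

/-- the basic two-step estimate -/
lemma two_step {n : ℕ} (e : OrthonormalBasis (Fin n) ℝ (Vec n)) (c : Vec n)
    (r : Fin n → ℝ) (hr : ∀ j, 0 < r j) (j : Fin n) (z : Pt n) (lam : ℝ) (hlam : 0 < lam)
    (s : ℝ) (hs : |s| = 1) (h : Pt n → ℝ≥0∞) (hh : Measurable h) :
    ∫⁻ y in obox e c r, ∫⁻ x in {x : Vec n | lam ≤ |⟪x - z.1, e j⟫|},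
        h (x, z.2 + s * ‖y - z.1‖ ^ 2 + (-s) * ‖x - y‖ ^ 2) ≤
      ENNReal.ofReal ((∏ i, (2 * r i)) / (4 * r j * lam)) * ∫⁻ x, h x := by
  have hm : Measurable (fun p : Vec n × Vec n =>
      h (p.2, z.2 + s * ‖p.1 - z.1‖ ^ 2 + (-s) * ‖p.2 - p.1‖ ^ 2)) := hh.comp (by fun_prop)
  rw [lintegral_lintegral_swap hm.aemeasurable, Measure.volume_eq_prod (α := Vec n) (β := ℝ),
    lintegral_prod _ hh.aemeasurable, ← lintegral_const_mul _ hh.lintegral_prod_right']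
  have hS : MeasurableSet {x : Vec n | lam ≤ |⟪x - z.1, e j⟫|} :=
    measurableSet_le measurable_const (by fun_prop)
  refine (setLIntegral_mono' hS (fun x hx => ?_)).trans (setLIntegral_le_lintegral _ _)
  have := slab_int e c r hr j (x - z.1) lam hlam hx
    (z.2 + s * (‖z.1‖ ^ 2 - ‖x‖ ^ 2)) s hs (fun t => h (x, t)) (by fun_prop)
  refine le_trans (le_of_eq ?_) this
  refine lintegral_congr fun y => ?_
  congr 2
  rw [norm_sub_sq_real, norm_sub_sq_real, inner_sub_right, real_inner_comm x y]
  ring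


lemma select_tuple {Ω : Type*} [MeasurableSpace Ω] (μ : Measure Ω) [IsFiniteMeasure μ]
    {η : ℝ≥0∞} (hη : η ≠ 0) (P : ∀ k : ℕ, (Fin k → Ω) → Prop) (h0 : P 0 Fin.elim0) (m : ℕ)
    (hstep : ∀ k < m, ∀ y : Fin k → Ω, P k y → ∃ S : Set Ω, MeasurableSet S ∧ η ≤ μ S ∧
      ∀ z ∈ S, P (k + 1) (Fin.snoc (α := fun _ => Ω) y z))
    (G : (Fin m → Ω) → ℝ≥0∞) (hG : Measurable G) :
    ∃ y, P m y ∧ G y * η ^ m ≤ ∫⁻ y, G y ∂(Measure.pi fun _ : Fin m => μ) := by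
  induction m with
  | zero =>
    refine ⟨Fin.elim0, h0, ?_⟩
    have : ∀ y : Fin 0 → Ω, G y = G Fin.elim0 := fun y => by rw [Subsingleton.elim y Fin.elim0]
    simp [this]
  | succ m ih =>
    set Φ := MeasurableEquiv.piFinSuccAbove (fun _ : Fin (m + 1) => Ω) (Fin.last m)
    have hΦ : ∀ z y, Φ.symm (z, y) = Fin.snoc (α := fun _ => Ω) y z := fun z y =>
      Fin.insertNth_last (α := fun _ => Ω) z y
    have hGm : Measurable (fun p : Ω × (Fin m → Ω) => G (Φ.symm p)) :=
      hG.comp Φ.symm.measurable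
    have e1 : ∫⁻ y, G y ∂(Measure.pi fun _ : Fin (m + 1) => μ) =
        ∫⁻ y, ∫⁻ z, G (Φ.symm (z, y)) ∂μ ∂(Measure.pi fun _ : Fin m => μ) := by
      rw [← lintegral_prod_symm' _ hGm]
      exact ((measurePreserving_piFinSuccAbove (fun _ : Fin (m + 1) => μ) (Fin.last m)).symm.lintegral_comp hG).symm
    obtain ⟨y, hy, hyG⟩ := ih (fun k hk => hstep k (by omega))
      (fun y => ∫⁻ z, G (Φ.symm (z, y)) ∂μ) hGm.lintegral_prod_left'
    obtain ⟨S, hS, hSη, hSP⟩ := hstep m (by omega) y hy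
    have hS0 : μ S ≠ 0 := fun h => hη (by simpa [h] using hSη)
    obtain ⟨z, hzS, hz⟩ := exists_le_setLAverage (μ := μ) (s := S)
      (f := fun z => G (Φ.symm (z, y))) hS0 (measure_ne_top _ _)
      (hGm.comp (by fun_prop : Measurable fun z => (z, y))).aemeasurable
    refine ⟨Φ.symm (z, y), ?_, ?_⟩
    · rw [hΦ]; exact hSP z hzS
    · rw [e1]
      refine le_trans ?_ hyG
      rw [pow_succ', ← mul_assoc]
      gcongr
      rw [setLAverage_eq] at hz
      calc G (Φ.symm (z, y)) * η ≤ ((∫⁻ x in S, G (Φ.symm (x, y)) ∂μ) / μ S) * μ S := by gcongr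
        _ = ∫⁻ x in S, G (Φ.symm (x, y)) ∂μ := ENNReal.div_mul_cancel hS0 (measure_ne_top _ _)
        _ ≤ _ := setLIntegral_le_lintegral _ _

lemma quantile {Ω : Type*} [MeasurableSpace Ω] (μ : Measure Ω) [IsFiniteMeasure μ]
    (g : Ω → ℝ) (hg : Measurable g) (η : ℝ≥0∞) (hη : η ≠ 0) (hη1 : η < μ {x | 0 < g x}) :
    ∃ r : ℝ, 0 < r ∧ η ≤ μ {x | r ≤ g x} ∧ μ {x | 2 * r < g x} ≤ η := by
  have hms : ∀ t : ℝ, MeasurableSet {x | t < g x} := fun t => measurableSet_lt measurable_const hg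
  have hinh : ∃ k : ℤ, μ {x | (2 : ℝ) ^ k < g x} ≤ η := by
    have ht := tendsto_measure_iInter_atTop (μ := μ) (s := fun k : ℕ => {x | (2 : ℝ) ^ k < g x})
      (fun k => (hms _).nullMeasurableSet)
      (fun a b hab x (hx : (2 : ℝ) ^ b < g x) =>
        lt_of_le_of_lt (pow_le_pow_right₀ (by norm_num) hab) hx)
      ⟨0, measure_ne_top _ _⟩
    have hemp : ⋂ k : ℕ, {x | (2 : ℝ) ^ k < g x} = ∅ := by
      ext x
      simp only [Set.mem_iInter, Set.mem_ofPred_eq, Set.mem_empty_iff_false, iff_false, not_forall,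
        not_lt]
      obtain ⟨k, hk⟩ := pow_unbounded_of_one_lt (g x) (by norm_num : (1 : ℝ) < 2)
      exact ⟨k, hk.le⟩
    rw [hemp, measure_empty] at ht
    obtain ⟨k, hk⟩ := (ht.eventually (gt_mem_nhds (pos_iff_ne_zero.2 hη))).exists
    exact ⟨k, by simpa using hk.le⟩
  have hbdd : ∃ b : ℤ, ∀ z : ℤ, μ {x | (2 : ℝ) ^ z < g x} ≤ η → b ≤ z := by
    have ht := tendsto_measure_iUnion_atTop (μ := μ)
      (s := fun k : ℕ => {x | (2 : ℝ) ^ (-(k : ℤ)) < g x})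
      (fun a b hab x (hx : (2 : ℝ) ^ (-(a : ℤ)) < g x) =>
        lt_of_le_of_lt (zpow_le_zpow_right₀ (by norm_num) (by omega)) hx)
    have hun : ⋃ k : ℕ, {x | (2 : ℝ) ^ (-(k : ℤ)) < g x} = {x | 0 < g x} := by
      ext x
      simp only [Set.mem_iUnion, Set.mem_ofPred_eq]
      constructor
      · rintro ⟨k, hk⟩; exact lt_trans (by positivity) hk
      · intro hx
        obtain ⟨k, hk⟩ := exists_pow_lt_of_lt_one hx (by norm_num : (1 / 2 : ℝ) < 1)
        refine ⟨k, ?_⟩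
        rw [zpow_neg, zpow_natCast, ← inv_pow]
        simpa using hk
    rw [hun] at ht
    obtain ⟨k, hk⟩ := (ht.eventually (lt_mem_nhds hη1)).exists
    refine ⟨-k, fun z hz => ?_⟩
    by_contra hlt
    push Not at hlt
    refine absurd (lt_of_lt_of_le hk (le_trans (measure_mono ?_) hz)) (lt_irrefl _)
    intro x (hx : (2 : ℝ) ^ (-(k : ℤ)) < g x)
    exact lt_of_le_of_lt (zpow_le_zpow_right₀ (by norm_num) hlt.le) hx
  obtain ⟨k, hk, hmin⟩ := Int.exists_least_of_bdd hbdd hinh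
  refine ⟨2 ^ (k - 1), by positivity, ?_, ?_⟩
  · have : ¬ μ {x | (2 : ℝ) ^ (k - 1) < g x} ≤ η := fun h => by have := hmin _ h; omega
    refine (not_le.1 this).le.trans (measure_mono fun x hx => ?_)
    exact le_of_lt (show (2 : ℝ) ^ (k - 1) < g x from hx)
  · have : (2 : ℝ) * 2 ^ (k - 1) = 2 ^ k := by
      rw [← zpow_one_add₀ (by norm_num)]; congr 1; ring
    rw [this]; exact hk

/-- span of the first `i` vectors -/
def Wspan {n k : ℕ} (c : Vec n) (y : Fin k → Vec n) (i : ℕ) : Submodule ℝ (Vec n) :=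
  Submodule.span ℝ {v | ∃ j : Fin k, j.1 < i ∧ y j - c = v}

lemma Wspan_snoc {n k : ℕ} (c : Vec n) (y : Fin k → Vec n) (z : Vec n) (i : ℕ) (hi : i ≤ k) :
    Wspan c (Fin.snoc (α := fun _ => Vec n) y z) i = Wspan c y i := by
  unfold Wspan
  congr 1
  ext v
  simp only [Set.mem_ofPred_eq]
  constructor
  · rintro ⟨j, hj, rfl⟩
    have hjk : j.1 < k := by omega
    refine ⟨⟨j.1, hjk⟩, hj, ?_⟩
    have : Fin.snoc (α := fun _ => Vec n) y z (Fin.castSucc ⟨j.1, hjk⟩) = y ⟨j.1, hjk⟩ :=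
      Fin.snoc_castSucc (α := fun _ => Vec n) z y ⟨j.1, hjk⟩
    rw [← this]; rfl
  · rintro ⟨j, hj, rfl⟩
    exact ⟨j.castSucc, hj, by rw [Fin.snoc_castSucc]⟩

lemma Wspan_ne_top {n k : ℕ} (hk : k < n) (c : Vec n) (y : Fin k → Vec n) (i : ℕ) :
    Wspan c y i ≠ ⊤ := by
  intro h
  have h1 : Wspan c y i ≤ Submodule.span ℝ (Set.range fun j => y j - c) :=
    Submodule.span_mono (by rintro v ⟨j, _, rfl⟩; exact ⟨j, rfl⟩)
  have h2 := finrank_range_le_card (R := ℝ) (fun j => y j - c)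
  rw [h, top_le_iff] at h1
  rw [Set.finrank, h1] at h2
  simp at h2
  omega

lemma greedy_tuple {n : ℕ} (hn : 0 < n) (A : Set (Vec n)) (hAf : volume A ≠ ⊤) (hA0 : volume A ≠ 0) (c : Vec n)
    (G : (Fin n → Vec n) → ℝ≥0∞) (hG : Measurable G) :
    ∃ (y : Fin n → Vec n) (r : Fin n → ℝ),
      (∀ i, 0 < r i ∧ r i ≤ Metric.infDist (y i - c) (Wspan c y i) ∧
        volume.restrict A {z | 2 * r i < Metric.infDist (z - c) (Wspan c y i)} ≤
          volume A / (2 * n)) ∧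
      G y * (volume A / (2 * n)) ^ n ≤ ∫⁻ y, G y ∂(Measure.pi fun _ => volume.restrict A) := by
  have hn' : (2 * n : ℝ≥0∞) ≠ 0 := by simp; omega
  have hnt : (2 * n : ℝ≥0∞) ≠ ⊤ := by finiteness
  have hη : volume A / (2 * n) ≠ 0 := by
    simp [ENNReal.div_eq_zero_iff, hA0, hnt]
  have hηlt : volume A / (2 * n) < volume A := by
    rw [ENNReal.div_lt_iff (Or.inl hn') (Or.inl hnt)]
    have : volume A * 1 < volume A * (2 * n) := by
      rw [ENNReal.mul_lt_mul_iff_right hA0 hAf]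
      exact_mod_cast (by omega : 1 < 2 * n)
    simpa using this
  have : IsFiniteMeasure (volume.restrict A) := ⟨by simpa using hAf.lt_top⟩
  let P : ∀ k : ℕ, (Fin k → Vec n) → Prop := fun k y => ∃ r : Fin k → ℝ,
    ∀ i, 0 < r i ∧ r i ≤ Metric.infDist (y i - c) (Wspan c y i) ∧
        volume.restrict A {z | 2 * r i < Metric.infDist (z - c) (Wspan c y i)} ≤
          volume A / (2 * n)
  have hstep : ∀ k < n, ∀ y : Fin k → Vec n, P k y → ∃ S : Set (Vec n), MeasurableSet S ∧
      volume A / (2 * n) ≤ volume.restrict A S ∧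
      ∀ z ∈ S, P (k + 1) (Fin.snoc (α := fun _ => Vec n) y z) := by
    rintro k hk y ⟨r, hr⟩
    set g : Vec n → ℝ := fun z => Metric.infDist (z - c) (Wspan c y k)
    have hg : Measurable g := by
      have : Continuous g := (Metric.continuous_infDist_pt _).comp (by fun_prop)
      exact this.measurable
    have hpos : volume.restrict A {z | 0 < g z} = volume A := by
      have h0 : volume.restrict A {z | 0 < g z}ᶜ = 0 := by
        refine le_antisymm ((Measure.restrict_apply_le _ _).trans ?_) (zero_le)
        have hsub : {z | 0 < g z}ᶜ ⊆ (fun z => z - c) ⁻¹' (Wspan c y k : Set (Vec n)) := by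
          intro z hz
          have hz0 : g z = 0 := le_antisymm (not_lt.1 hz) Metric.infDist_nonneg
          have hcl : IsClosed (Wspan c y k : Set (Vec n)) :=
            Submodule.closed_of_finiteDimensional _
          exact (hcl.mem_iff_infDist_zero ⟨0, Submodule.zero_mem _⟩).2 hz0
        refine (measure_mono hsub).trans ?_
        simp_rw [sub_eq_add_neg]
        rw [measure_preimage_add_right]
        exact (Measure.addHaar_submodule volume _ (Wspan_ne_top hk c y k)).le
      have h1 := measure_add_measure_compl (μ := volume.restrict A)
        (measurableSet_lt measurable_const hg : MeasurableSet {z | 0 < g z})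
      rw [h0, add_zero] at h1
      rw [h1]; simp
    obtain ⟨ρ, hρ, hρ1, hρ2⟩ := quantile (volume.restrict A) g hg (volume A / (2 * n)) hη
      (by rw [hpos]; exact hηlt)
    refine ⟨{z | ρ ≤ g z}, measurableSet_le measurable_const hg, hρ1, fun z hz => ?_⟩
    refine ⟨Fin.snoc (α := fun _ => ℝ) r ρ, fun i => ?_⟩
    rw [Wspan_snoc _ _ _ _ (by omega)]
    induction i using Fin.lastCases with
    | last => simp only [Fin.snoc_last, Fin.val_last]; exact ⟨hρ, hz, hρ2⟩
    | cast i => simp only [Fin.snoc_castSucc, Fin.val_castSucc]; exact hr i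
  obtain ⟨y, ⟨r, hr⟩, hy⟩ := select_tuple (volume.restrict A) hη P ⟨Fin.elim0, fun i => i.elim0⟩ n
    hstep G hG
  exact ⟨y, r, hr, hy⟩


def gdet {n : ℕ} (f : Fin n → Vec n) : ℝ := Matrix.det (Matrix.of fun i j => f i j)

lemma measurable_gdet {n : ℕ} (c : Vec n) :
    Measurable (fun y : Fin n → Vec n => gdet (fun j => y j - c)) := by
  unfold gdet
  simp_rw [Matrix.det_apply]
  refine Finset.measurable_sum _ fun σ _ => ?_
  refine Measurable.const_smul ?_ _
  refine Finset.measurable_prod _ fun i _ => ?_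
  simp only [Matrix.of_apply, PiLp.sub_apply]
  fun_prop

lemma abs_det_eq_gdet {n : ℕ} (e : OrthonormalBasis (Fin n) ℝ (Vec n)) (f : Fin n → Vec n) :
    |e.toBasis.det f| = |gdet f| := by
  have h1 : (e.toBasis.toMatrix f) =
      e.toBasis.toMatrix (EuclideanSpace.basisFun (Fin n) ℝ).toBasis *
        (EuclideanSpace.basisFun (Fin n) ℝ).toBasis.toMatrix f := by
    rw [Module.Basis.toMatrix_mul_toMatrix]
  have h2 : ((EuclideanSpace.basisFun (Fin n) ℝ).toBasis.toMatrix f) =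
      (Matrix.of fun i j => f i j).transpose := by
    ext i j
    simp [Module.Basis.toMatrix_apply]
  rw [Module.Basis.det_apply, h1, Matrix.det_mul, h2, Matrix.det_transpose, abs_mul]
  have h3 := OrthonormalBasis.det_to_matrix_orthonormalBasis_real e (EuclideanSpace.basisFun (Fin n) ℝ)
  rw [Module.Basis.det_apply] at h3
  have h4 : |(e.toBasis.toMatrix ⇑(EuclideanSpace.basisFun (Fin n) ℝ).toBasis).det| = 1 := by
    rw [OrthonormalBasis.coe_toBasis]
    rcases h3 with h | h <;> rw [h] <;> simp
  rw [h4, one_mul]; rfl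

lemma greedy_box {n : ℕ} (hn : 0 < n) (A : Set (Vec n)) (hA : MeasurableSet A)
    (hAf : volume A ≠ ⊤) (hA0 : volume A ≠ 0) (c : Vec n) :
    ∃ (e : OrthonormalBasis (Fin n) ℝ (Vec n)) (r : Fin n → ℝ), (∀ j, 0 < r j) ∧
      volume A / 2 ≤ volume (A ∩ obox e c r) ∧
      ENNReal.ofReal (∏ j, (r j / 2)) * (volume A / (2 * n)) ^ n ≤
        ∫⁻ y, ENNReal.ofReal |gdet (fun j => y j - c)| ∂(Measure.pi fun _ => volume.restrict A) := by
  obtain ⟨y, r, hyr, hG⟩ := greedy_tuple hn A hAf hA0 c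
    (fun y => ENNReal.ofReal |gdet (fun j => y j - c)|) ((measurable_gdet c).abs.ennreal_ofReal)
  set f : Fin n → Vec n := fun j => y j - c with hf
  have hcard : Module.finrank ℝ (Vec n) = Fintype.card (Fin n) := by simp
  set e := InnerProductSpace.gramSchmidtOrthonormalBasis hcard f with he
  have hW : ∀ i : Fin n, Wspan c y i = Submodule.span ℝ (f '' Set.Iio i) := by
    intro i
    unfold Wspan
    congr 1
  have horth : ∀ i : Fin n, ∀ w ∈ Wspan c y i, ⟪e i, w⟫ = 0 := by
    intro i w hw
    rw [hW] at hw
    induction hw using Submodule.span_induction with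
    | mem x hx =>
      obtain ⟨j, hj, rfl⟩ := hx
      exact InnerProductSpace.gramSchmidtOrthonormalBasis_inv_triangular hcard f hj
    | zero => simp
    | add x y _ _ h1 h2 => rw [inner_add_right, h1, h2, add_zero]
    | smul a x _ h => rw [inner_smul_right, h, mul_zero]
  have hle : ∀ (i : Fin n) (z : Vec n), |⟪e i, z⟫| ≤ Metric.infDist z (Wspan c y i) := by
    intro i z
    refine (Metric.le_infDist ⟨0, Submodule.zero_mem _⟩).2 fun w hw => ?_
    have h1 : ⟪e i, z⟫ = ⟪e i, z - w⟫ := by rw [inner_sub_right, horth i w hw, sub_zero]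
    rw [h1, dist_eq_norm]
    refine (abs_real_inner_le_norm _ _).trans ?_
    rw [e.norm_eq_one, one_mul]
  have hge : ∀ i : Fin n, r i ≤ ⟪e i, f i⟫ := by
    intro i
    set g := InnerProductSpace.gramSchmidt ℝ f i with hg
    have h1 : f i - g ∈ Wspan c y i := by
      rw [hW, ← InnerProductSpace.span_gramSchmidt_Iio ℝ f i]
      have : f i - g = ∑ k ∈ Finset.Iio i,
          (Submodule.span ℝ {InnerProductSpace.gramSchmidt ℝ f k}).starProjection (f i) := by
        rw [hg, InnerProductSpace.gramSchmidt_def]; abel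
      rw [this]
      refine Submodule.sum_mem _ fun k hk => ?_
      rw [Submodule.starProjection_singleton]
      exact Submodule.smul_mem _ _ (Submodule.subset_span ⟨k, Finset.mem_Iio.1 hk, rfl⟩)
    have h2 : r i ≤ ‖g‖ := by
      refine (hyr i).2.1.trans ?_
      refine (Metric.infDist_le_dist_of_mem (s := (Wspan c y i : Set (Vec n))) h1).trans ?_
      rw [dist_eq_norm]
      have : y i - c - (f i - g) = g := by simp [hf]
      rw [this]
    have hg0 : g ≠ 0 := by
      intro h0
      rw [h0, norm_zero] at h2
      exact absurd (hyr i).1 (not_lt.2 h2)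
    have hgn : InnerProductSpace.gramSchmidtNormed ℝ f i ≠ 0 := by
      unfold InnerProductSpace.gramSchmidtNormed
      simpa using hg0
    have h3 : e i = ‖g‖⁻¹ • g := by
      rw [he, InnerProductSpace.gramSchmidtOrthonormalBasis_apply hcard hgn]; rfl
    have h4 : ⟪e i, f i⟫ = ‖g‖ := by
      have : ⟪e i, f i⟫ = ⟪e i, g⟫ := by
        have h5 := horth i _ h1
        rw [inner_sub_right] at h5
        linarith
      rw [this, h3, inner_smul_left, real_inner_self_eq_norm_sq]
      have : ‖g‖ ≠ 0 := norm_ne_zero_iff.2 hg0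
      simp; field_simp
    rw [h4]; exact h2
  refine ⟨e, fun j => 2 * r j, fun j => by have := (hyr j).1; positivity, ?_, ?_⟩
  · have hsub : A \ obox e c (fun j => 2 * r j) ⊆
        ⋃ i, {z | 2 * r i < Metric.infDist (z - c) (Wspan c y i)} ∩ A := by
      rintro z ⟨hzA, hz⟩
      simp only [obox, Set.mem_ofPred_eq, not_forall, not_le] at hz
      obtain ⟨j, hj⟩ := hz
      refine Set.mem_iUnion.2 ⟨j, ?_, hzA⟩
      refine lt_of_lt_of_le hj ?_
      rw [real_inner_comm]
      exact hle j _
    have h1 : volume (A \ obox e c (fun j => 2 * r j)) ≤ volume A / 2 := by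
      calc _ ≤ ∑ i : Fin n, volume ({z | 2 * r i < Metric.infDist (z - c) (Wspan c y i)} ∩ A) :=
            (measure_mono hsub).trans (measure_iUnion_fintype_le _ _)
        _ ≤ ∑ i : Fin n, volume A / (2 * n) := by
            refine Finset.sum_le_sum fun i _ => ?_
            rw [← Measure.restrict_apply' hA]
            exact (hyr i).2.2
        _ = volume A / 2 := by
            rw [Finset.sum_const, Finset.card_univ, Fintype.card_fin, nsmul_eq_mul]
            have : (n : ℝ≥0∞) ≠ 0 := by exact_mod_cast hn.ne'
            rw [mul_comm (2 : ℝ≥0∞), ENNReal.div_eq_inv_mul, ENNReal.mul_inv (Or.inl this) (Or.inl (by simp)),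
              ← mul_assoc, ← mul_assoc, ENNReal.mul_inv_cancel this (by simp), one_mul, ENNReal.div_eq_inv_mul]
    have h2 := measure_inter_add_sdiff A (measurableSet_obox e c (fun j => 2 * r j)) (μ := volume)
    have h3 : volume A / 2 + volume A / 2 ≤ volume (A ∩ obox e c (fun j => 2 * r j)) + volume A / 2 := by
      rw [ENNReal.add_halves, ← h2]
      gcongr
      rw [h2]; exact h1
    exact (ENNReal.add_le_add_iff_right (ENNReal.div_ne_top hAf (by simp))).1 h3
  · refine le_trans ?_ hG
    gcongr
    rw [← abs_det_eq_gdet e, he, InnerProductSpace.gramSchmidtOrthonormalBasis_det, Finset.abs_prod]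
    refine Finset.prod_le_prod (fun i _ => by have := (hyr i).1; positivity) fun i _ => ?_
    have := hge i
    rw [mul_div_cancel_left₀ _ two_ne_zero]
    exact this.trans (le_abs_self _)


lemma affine_vol {n : ℕ} (f : Fin n → Vec n) (κ : Fin n → ℝ) (T : Set (Fin n → ℝ))
    (hT : MeasurableSet T) :
    ENNReal.ofReal |gdet f| * volume {x : Vec n | (fun j => κ j + 2 * ⟪x, f j⟫) ∈ T} ≤ volume T := by
  by_cases h0 : gdet f = 0
  · simp [h0]
  set M : Matrix (Fin n) (Fin n) ℝ := Matrix.of fun i j => f i j with hM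
  have hMd : M.det ≠ 0 := h0
  have hL : LinearMap.det (Matrix.toLin' ((2 : ℝ) • M)) = 2 ^ n * gdet f := by
    rw [LinearMap.det_toLin', Matrix.det_smul]; simp [gdet, hM]
  have hL0 : LinearMap.det (Matrix.toLin' ((2 : ℝ) • M)) ≠ 0 := by rw [hL]; positivity
  have h1 : {x : Vec n | (fun j => κ j + 2 * ⟪x, f j⟫) ∈ T} =
      WithLp.ofLp ⁻¹' ((Matrix.toLin' ((2 : ℝ) • M)) ⁻¹' ((fun t => κ + t) ⁻¹' T)) := by
    ext x
    simp only [Set.mem_ofPred_eq, Set.mem_preimage]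
    have : (fun j => κ j + 2 * ⟪x, f j⟫) =
        κ + (Matrix.toLin' ((2 : ℝ) • M)) (WithLp.ofLp x) := by
      funext j
      simp [Matrix.toLin'_apply, Matrix.mulVec, dotProduct, PiLp.inner_apply, hM,
        Finset.mul_sum, mul_assoc]
    rw [this]
  have hT1 : MeasurableSet ((fun t => κ + t) ⁻¹' T) := hT.preimage (measurable_const_add κ)
  rw [h1, (PiLp.volume_preserving_ofLp (Fin n)).measure_preimage, Measure.addHaar_preimage_linearMap _ hL0,
    measure_preimage_add, hL, ← mul_assoc, ← ENNReal.ofReal_mul (abs_nonneg _), ← abs_mul]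
  · refine mul_le_of_le_one_left' ?_
    rw [ENNReal.ofReal_le_one]
    have : gdet f * (2 ^ n * gdet f)⁻¹ = (2 ^ n)⁻¹ := by field_simp
    rw [this, abs_of_pos (by positivity)]
    exact inv_le_one_of_one_le₀ (one_le_pow₀ one_le_two)
  · exact (hT1.preimage (LinearMap.continuous_of_finiteDimensional _).measurable).nullMeasurableSet

lemma pi_sections {n : ℕ} (F : Set (Pt n)) (hF : MeasurableSet F) :
    ∫⁻ y : Fin n → Vec n, volume {t : Fin n → ℝ | ∀ j, (y j, t j) ∈ F} = volume F ^ n := by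
  have hS : MeasurableSet {p : (Fin n → Vec n) × (Fin n → ℝ) | ∀ j, (p.1 j, p.2 j) ∈ F} := by
    rw [Set.ofPred_forall]
    refine MeasurableSet.iInter fun j => ?_
    exact (by fun_prop : Measurable (fun p : (Fin n → Vec n) × (Fin n → ℝ) => (p.1 j, p.2 j))) hF
  have h1 := Measure.prod_apply (μ := (volume : Measure (Fin n → Vec n)))
    (ν := (volume : Measure (Fin n → ℝ))) hS
  have h2 := (volume_measurePreserving_arrowProdEquivProdArrow (Vec n) ℝ (Fin n)).measure_preimage
    hS.nullMeasurableSet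
  have h3 : (MeasurableEquiv.arrowProdEquivProdArrow (Vec n) ℝ (Fin n)) ⁻¹'
      {p : (Fin n → Vec n) × (Fin n → ℝ) | ∀ j, (p.1 j, p.2 j) ∈ F} = Set.univ.pi fun _ => F := by
    ext p
    simp [MeasurableEquiv.arrowProdEquivProdArrow, Equiv.arrowProdEquivProdArrow]
  rw [h3, volume_pi_pi] at h2
  simp only [Finset.prod_const, Finset.card_univ, Fintype.card_fin] at h2
  rw [h2, Measure.volume_eq_prod, h1]
  rfl

lemma det_cov {n : ℕ} (y0 : Pt n) (F : Set (Pt n)) (hF : MeasurableSet F) :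
    ∫⁻ x' : Vec n, ∫⁻ y, ENNReal.ofReal |gdet (fun j => y j - y0.1)|
      ∂(Measure.pi fun _ : Fin n => volume.restrict (psec (-1) F (x', y0.2 + 1 * ‖x' - y0.1‖ ^ 2))) ≤
      volume F ^ n := by
  set S : Set (Vec n × (Fin n → Vec n)) :=
    {p | ∀ j, (p.2 j, (y0.2 + 1 * ‖p.1 - y0.1‖ ^ 2) + (-1) * ‖p.2 j - p.1‖ ^ 2) ∈ F} with hS
  have hSm : MeasurableSet S := by
    rw [hS, Set.ofPred_forall]
    refine MeasurableSet.iInter fun j => ?_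
    exact (by fun_prop : Measurable (fun p : Vec n × (Fin n → Vec n) =>
      (p.2 j, (y0.2 + 1 * ‖p.1 - y0.1‖ ^ 2) + (-1) * ‖p.2 j - p.1‖ ^ 2))) hF
  have hgm := (measurable_gdet y0.1).abs.ennreal_ofReal
  have h1 : ∀ x' : Vec n, ∫⁻ y, ENNReal.ofReal |gdet (fun j => y j - y0.1)|
      ∂(Measure.pi fun _ : Fin n => volume.restrict (psec (-1) F (x', y0.2 + 1 * ‖x' - y0.1‖ ^ 2)))
      = ∫⁻ y, ENNReal.ofReal |gdet (fun j => y j - y0.1)| * S.indicator 1 (x', y) := by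
    intro x'
    rw [← Measure.restrict_pi_pi, ← lintegral_indicator
      (MeasurableSet.univ_pi fun _ => measurableSet_psec (-1) hF _)]
    refine lintegral_congr fun y => ?_
    by_cases h : (x', y) ∈ S
    · have h' : y ∈ Set.univ.pi fun _ => psec (-1) F (x', y0.2 + 1 * ‖x' - y0.1‖ ^ 2) := by
        intro j _; exact h j
      rw [Set.indicator_of_mem h, Set.indicator_of_mem h']; simp
    · have h' : y ∉ Set.univ.pi fun _ => psec (-1) F (x', y0.2 + 1 * ‖x' - y0.1‖ ^ 2) := by
        intro h''; exact h fun j => h'' j (Set.mem_univ j)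
      rw [Set.indicator_of_notMem h, Set.indicator_of_notMem h']; simp
  simp_rw [h1]
  have hm : Measurable (fun p : Vec n × (Fin n → Vec n) =>
      ENNReal.ofReal |gdet (fun j => p.2 j - y0.1)| * S.indicator 1 p) :=
    (hgm.comp measurable_snd).mul (measurable_one.indicator hSm)
  rw [lintegral_lintegral_swap hm.aemeasurable]
  rw [← pi_sections F hF]
  refine lintegral_mono fun y => ?_
  have hsec : Measurable (fun x' : Vec n =>
      S.indicator (1 : Vec n × (Fin n → Vec n) → ℝ≥0∞) (x', y)) :=
    (measurable_one.indicator hSm).comp (by fun_prop : Measurable (fun x' : Vec n => (x', y)))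
  simp only
  rw [lintegral_const_mul _ hsec]
  set T : Set (Fin n → ℝ) := {t | ∀ j, (y j, t j) ∈ F} with hT
  have hTm : MeasurableSet T := by
    rw [hT, Set.ofPred_forall]
    refine MeasurableSet.iInter fun j => ?_
    exact (by fun_prop : Measurable (fun t : (Fin n → ℝ) => (y j, t j))) hF
  have h2 := affine_vol (fun j => y j - y0.1) (fun j => y0.2 + ‖y0.1‖^2 - ‖y j‖ ^ 2) T hTm
  refine le_trans (le_of_eq ?_) h2
  congr 1
  have h3 : {x : Vec n | (fun j => y0.2 + ‖y0.1‖^2 - ‖y j‖ ^ 2 + 2 * ⟪x, y j - y0.1⟫) ∈ T} =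
      {x | (x, y) ∈ S} := by
    ext x
    simp only [hS, hT, Set.mem_ofPred_eq]
    refine forall_congr' fun j => ?_
    have : y0.2 + ‖y0.1‖^2 - ‖y j‖ ^ 2 + 2 * ⟪x, y j - y0.1⟫ =
      (y0.2 + 1 * ‖x - y0.1‖ ^ 2) + (-1) * ‖y j - x‖ ^ 2 := by
      rw [@norm_sub_sq_real, @norm_sub_sq_real, inner_sub_right, real_inner_comm x (y j)]; ring
    rw [this]
  have hm3 : MeasurableSet {x | (x, y) ∈ S} := by
    exact (by fun_prop : Measurable (fun x : Vec n => (x, y))) hSm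
  rw [h3, ← lintegral_indicator_one hm3]
  rfl


/-- first refinement of `E` -/
def ref1 {n : ℕ} (E F : Set (Pt n)) (α : ℝ) : Set (Pt n) :=
  E ∩ {x | ENNReal.ofReal (α / 2) ≤ volume (psec (-1) F x)}

lemma measurableSet_ref1 {n : ℕ} {E F : Set (Pt n)} (hE : MeasurableSet E) (hF : MeasurableSet F)
    (α : ℝ) : MeasurableSet (ref1 E F α) :=
  hE.inter (measurableSet_le measurable_const (measurable_vol_psec _ hF))

lemma step1 {n : ℕ} (hn : 0 < n) {E F : Set (Pt n)} (hE : MeasurableSet E) (hF : MeasurableSet F)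
    {a b L : ℝ} (ha : 0 < a) (hb : 0 < b) (hL : 0 < L) (hEa : volume E ≤ ENNReal.ofReal a)
    (hFb : volume F ≤ ENNReal.ofReal b) (hLam : ENNReal.ofReal L ≤ Lam E F) :
    ∃ (x0 y0 : Pt n) (e : OrthonormalBasis (Fin n) ℝ (Vec n)) (rs : Fin n → ℝ) (A : Set (Vec n)),
      x0.2 = y0.2 + ‖x0.1 - y0.1‖ ^ 2 ∧ (∀ j, 0 < rs j) ∧ MeasurableSet A ∧ volume A ≠ ⊤ ∧
      A ⊆ obox e y0.1 rs ∧ ENNReal.ofReal (L / a / 32) ≤ volume A ∧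
      (∏ j, rs j) * (L / a) ^ n * (L / b) ≤ 32 * (64 * n) ^ n * b ^ n ∧
      ∀ y ∈ A, ENNReal.ofReal (L / b / 4) ≤
        volume (psec 1 (ref1 E F (L / a)) (y, x0.2 + (-1) * ‖y - x0.1‖ ^ 2)) := by
  set E1 := ref1 E F (L / a) with hE1
  have hE1m : MeasurableSet E1 := measurableSet_ref1 hE hF _
  have h1 : ENNReal.ofReal (L / 2) ≤ Lam E1 F := by
    have := refine_set (measurable_vol_psec (-1) hF) ha hL.le hEa hLam
    rw [show L / (2 * a) = L / a / 2 by field_simp] at this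
    exact this
  rw [Lam_eq_swap hE1m hF] at h1
  have h2 := refine_set (measurable_vol_psec 1 hE1m) hb (by positivity) hFb h1
  set F2 := F ∩ {y | ENNReal.ofReal (L / 2 / (2 * b)) ≤ volume (psec 1 E1 y)} with hF2
  have hF2m : MeasurableSet F2 :=
    hF.inter (measurableSet_le measurable_const (measurable_vol_psec _ hE1m))
  rw [← Lam_eq_swap hE1m hF2m] at h2
  have hE1a : volume E1 ≤ ENNReal.ofReal a := (measure_mono Set.inter_subset_left).trans hEa
  have hF2b : volume F2 ≤ ENNReal.ofReal b := (measure_mono Set.inter_subset_left).trans hFb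
  have h3 := refine_set (measurable_vol_psec (-1) hF2m) ha (by positivity) hE1a h2
  set E3 := E1 ∩ {x | ENNReal.ofReal (L / 2 / 2 / (2 * a)) ≤ volume (psec (-1) F2 x)} with hE3
  have hE3m : MeasurableSet E3 :=
    hE1m.inter (measurableSet_le measurable_const (measurable_vol_psec _ hF2m))
  have h3' : ENNReal.ofReal (L / 2 / 2 / 2) ≤ Lam E3 F2 := h3
  rw [Lam_eq_swap hE3m hF2m] at h3'
  have h4 := refine_set (measurable_vol_psec 1 hE3m) hb (by positivity) hF2b h3'
  obtain ⟨y0, hy0F, hy0⟩ : (F2 ∩ {y | ENNReal.ofReal (L / 2 / 2 / 2 / (2 * b)) ≤ volume (psec 1 E3 y)}).Nonempty := by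
    by_contra hne
    rw [Set.not_nonempty_iff_eq_empty] at hne
    rw [hne, Measure.restrict_empty, lintegral_zero_measure] at h4
    have : 0 < ENNReal.ofReal (L / 2 / 2 / 2 / 2) := by
      rw [ENNReal.ofReal_pos]; positivity
    exact absurd this (not_lt.2 h4)
  have hy0' : ENNReal.ofReal (L / 2 / 2 / 2 / (2 * b)) ≤ volume (psec 1 E3 y0) := hy0
  set Φ : Vec n → ℝ≥0∞ := fun x' => ∫⁻ y, ENNReal.ofReal |gdet (fun j => y j - y0.1)|
      ∂(Measure.pi fun _ : Fin n => volume.restrict (psec (-1) F2 (x', y0.2 + 1 * ‖x' - y0.1‖ ^ 2))) with hΦ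
  have hdet : ∫⁻ x', Φ x' ≤ volume F2 ^ n := det_cov y0 F2 hF2m
  obtain ⟨x0', hx0X, hx0Φ⟩ : ∃ x' ∈ psec 1 E3 y0, Φ x' ≤ ENNReal.ofReal (32 * b ^ n / (L / b)) := by
    by_contra hcon
    push Not at hcon
    have h5 : ENNReal.ofReal (32 * b ^ n / (L / b)) * ENNReal.ofReal (L / 2 / 2 / 2 / (2 * b)) ≤
        ENNReal.ofReal b ^ n := by
      calc _ ≤ ENNReal.ofReal (32 * b ^ n / (L / b)) * volume (psec 1 E3 y0) := by gcongr
        _ = ∫⁻ x' in psec 1 E3 y0, ENNReal.ofReal (32 * b ^ n / (L / b)) := by simp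
        _ ≤ ∫⁻ x' in psec 1 E3 y0, Φ x' :=
            setLIntegral_mono' (measurableSet_psec 1 hE3m y0) fun x hx => (hcon x hx).le
        _ ≤ ∫⁻ x', Φ x' := setLIntegral_le_lintegral _ _
        _ ≤ volume F2 ^ n := hdet
        _ ≤ _ := by gcongr
    rw [← ENNReal.ofReal_mul (by positivity), ← ENNReal.ofReal_pow hb.le,
      ENNReal.ofReal_le_ofReal_iff (by positivity)] at h5
    have h6 : 32 * b ^ n / (L / b) * (L / 2 / 2 / 2 / (2 * b)) = 2 * b ^ n := by
      field_simp; norm_num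
    rw [h6] at h5
    have : 0 < b ^ n := by positivity
    linarith
  set x0 : Pt n := (x0', y0.2 + 1 * ‖x0' - y0.1‖ ^ 2) with hx0
  have hx0E : x0 ∈ E3 := hx0X
  have hsec : ENNReal.ofReal (L / 2 / 2 / (2 * a)) ≤ volume (psec (-1) F2 x0) := hx0E.2
  obtain ⟨A0, hA0m, hA0s, hA0l, hA0t⟩ := Measure.exists_subset_measure_lt_top
    (measurableSet_psec (-1) hF2m x0) (r := ENNReal.ofReal (L / a / 16)) (by
      refine lt_of_lt_of_le ?_ hsec
      rw [ENNReal.ofReal_lt_ofReal_iff (by positivity)]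
      rw [show L / 2 / 2 / (2 * a) = L / a / 8 by field_simp; norm_num]
      have : 0 < L / a := by positivity
      linarith)
  obtain ⟨e, r, hr, hA, hdt⟩ := greedy_box hn A0 hA0m hA0t.ne (ne_of_gt (lt_of_le_of_lt zero_le hA0l)) y0.1
  refine ⟨x0, y0, e, r, A0 ∩ obox e y0.1 r, by simp [hx0], hr, hA0m.inter (measurableSet_obox e _ _), ?_,
    Set.inter_subset_right, ?_, ?_, ?_⟩
  · exact ((measure_mono Set.inter_subset_left).trans_lt hA0t).ne
  · refine le_trans ?_ hA
    rw [show L / a / 32 = L / a / 16 / 2 by ring, ENNReal.ofReal_div_of_pos two_pos]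
    gcongr
    simp
  · have h7 : ∫⁻ y, ENNReal.ofReal |gdet (fun j => y j - y0.1)| ∂(Measure.pi fun _ => volume.restrict A0)
        ≤ Φ x0' := by
      rw [hΦ]
      simp only
      rw [← Measure.restrict_pi_pi, ← Measure.restrict_pi_pi]
      exact lintegral_mono_set (Set.pi_mono fun _ _ => hA0s)
    have h8 := hdt.trans (h7.trans hx0Φ)
    have h9 : ENNReal.ofReal (L / a / (32 * n)) ≤ volume A0 / (2 * n) := by
      rw [show L / a / (32 * n) = L / a / 16 / (2 * n) by field_simp; norm_num,
        ENNReal.ofReal_div_of_pos (by positivity)]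
      gcongr
      rw [ENNReal.ofReal_mul zero_le_two]; simp
    have h10 : ENNReal.ofReal (∏ j, (r j / 2)) * ENNReal.ofReal (L / a / (32 * n)) ^ n ≤
        ENNReal.ofReal (32 * b ^ n / (L / b)) := by
      refine le_trans ?_ h8
      gcongr
    rw [← ENNReal.ofReal_pow (by positivity), ← ENNReal.ofReal_mul
      (Finset.prod_nonneg fun j _ => (half_pos (hr j)).le),
      ENNReal.ofReal_le_ofReal_iff (by positivity), le_div_iff₀ (by positivity)] at h10
    rw [Finset.prod_div_distrib, div_pow] at h10
    simp only [Finset.prod_const, Finset.card_univ, Fintype.card_fin] at h10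
    have hn' : (0 : ℝ) < n := by exact_mod_cast hn
    have h11 : (∏ j, r j) / 2 ^ n * ((L / a) ^ n / (32 * (n : ℝ)) ^ n) * (L / b) =
      ((∏ j, r j) * (L / a) ^ n * (L / b)) / (64 * n) ^ n := by
      rw [show (64 * (n : ℝ)) = 2 * (32 * n) by ring, mul_pow 2]
      field_simp
    rw [h11, div_le_iff₀ (by positivity)] at h10
    linarith
  · intro y hy
    have h12 : (y, x0.2 + (-1) * ‖y - x0.1‖ ^ 2) ∈ F2 := hA0s hy.1
    have h13 : ENNReal.ofReal (L / 2 / (2 * b)) ≤ _ := h12.2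
    rw [show L / b / 4 = L / 2 / (2 * b) by field_simp; norm_num]
    exact h13


def Xset {n : ℕ} (e : OrthonormalBasis (Fin n) ℝ (Vec n)) (E1 : Set (Pt n)) (x0 : Pt n)
    (r : Fin n → ℝ) (R η : ℝ) (j0 : Fin n) (y : Vec n) : Set (Vec n) :=
  {x | (x, x0.2 + (-1) * ‖y - x0.1‖ ^ 2 + 1 * ‖x - y‖ ^ 2) ∈ E1 ∧
    (∀ j, |⟪x - x0.1, e j⟫| < R * r j) ∧ η * r j0 ≤ |⟪x - x0.1, e j0⟫|}

lemma measurableSet_Xset_joint {n : ℕ} (e : OrthonormalBasis (Fin n) ℝ (Vec n)) {E1 : Set (Pt n)}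
    (hE1 : MeasurableSet E1) (x0 : Pt n) (r : Fin n → ℝ) (R η : ℝ) (j0 : Fin n) :
    MeasurableSet {p : Vec n × Vec n | p.2 ∈ Xset e E1 x0 r R η j0 p.1} := by
  have h1 : MeasurableSet {p : Vec n × Vec n |
      (p.2, x0.2 + (-1) * ‖p.1 - x0.1‖ ^ 2 + 1 * ‖p.2 - p.1‖ ^ 2) ∈ E1} :=
    (by fun_prop : Measurable (fun p : Vec n × Vec n =>
      (p.2, x0.2 + (-1) * ‖p.1 - x0.1‖ ^ 2 + 1 * ‖p.2 - p.1‖ ^ 2))) hE1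
  have h2 : MeasurableSet {p : Vec n × Vec n | ∀ j, |⟪p.2 - x0.1, e j⟫| < R * r j} := by
    rw [Set.ofPred_forall]
    exact MeasurableSet.iInter fun j => measurableSet_lt (by fun_prop) measurable_const
  have h3 : MeasurableSet {p : Vec n × Vec n | η * r j0 ≤ |⟪p.2 - x0.1, e j0⟫|} :=
    measurableSet_le measurable_const (by fun_prop)
  exact h1.inter (h2.inter h3)

lemma measurableSet_Xset {n : ℕ} (e : OrthonormalBasis (Fin n) ℝ (Vec n)) {E1 : Set (Pt n)}
    (hE1 : MeasurableSet E1) (x0 : Pt n) (r : Fin n → ℝ) (R η : ℝ) (j0 : Fin n) (y : Vec n) :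
    MeasurableSet (Xset e E1 x0 r R η j0 y) :=
  measurable_prodMk_left (measurableSet_Xset_joint e hE1 x0 r R η j0)

lemma prod_ite_le {n : ℕ} (r : Fin n → ℝ) (hr : ∀ j, 0 < r j) (R η : ℝ) (hR : 1 ≤ R) (hη : 0 < η)
    (j0 : Fin n) :
    ∏ j, (2 * (if j = j0 then η * r j else R * r j)) ≤ 2 ^ n * η * R ^ n * ∏ j, r j := by
  have h1 : ∀ j, 2 * (if j = j0 then η * r j else R * r j) =
      2 * ((if j = j0 then η else 1) * (if j = j0 then 1 else R) * r j) := by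
    intro j; split_ifs <;> ring
  simp_rw [h1, Finset.prod_mul_distrib]
  simp only [Finset.prod_const, Finset.card_univ, Fintype.card_fin, Finset.prod_ite_eq', Finset.mem_univ, if_true]
  have h2 : ∏ j, (if j = j0 then 1 else R) ≤ R ^ n := by
    calc _ ≤ ∏ j : Fin n, R := Finset.prod_le_prod (fun j _ => by split_ifs <;> linarith)
          (fun j _ => by split_ifs <;> linarith)
      _ = R ^ n := by simp
  have h3 : 0 ≤ ∏ j, r j := Finset.prod_nonneg fun j _ => (hr j).le
  rw [← mul_assoc, ← mul_assoc]
  gcongr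

lemma step2a {n : ℕ} (j0 : Fin n) {E1 : Set (Pt n)} (hE1 : MeasurableSet E1)
    (e : OrthonormalBasis (Fin n) ℝ (Vec n)) (x0 : Pt n) (c : Vec n) (r rs : Fin n → ℝ)
    (hr : ∀ j, 0 < r j) (hrs : ∀ j, 0 < rs j) {ρ : ℝ} (hρ : 0 < ρ) (hrr : ∀ j, r j * rs j = ρ)
    {A : Set (Vec n)} (hAc : A ⊆ obox e c rs)
    {a α β ε p q R η mA : ℝ} (ha : 0 < a) (hα : 0 < α) (hβ : 0 < β) (hε : 0 < ε) (hp : 0 < p)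
    (hVA : volume A = ENNReal.ofReal mA) (hmA : α / 32 ≤ mA)
    (hEa : volume E1 ≤ ENNReal.ofReal a) (haβ : a * ε = β * ρ)
    (hP : ∏ j, rs j ≤ p * α) (hQ : ∏ j, r j ≤ q * β)
    (hR1 : 1 ≤ R) (hR : n * 2 ^ n * p * 2 ^ 10 ≤ R * ε) (hη : 0 < η)
    (hηq : 2 ^ n * η * R ^ n * q ≤ 1 / 16)
    (hsec : ∀ y ∈ A, ENNReal.ofReal (β / 4) ≤
      volume (psec 1 E1 (y, x0.2 + (-1) * ‖y - x0.1‖ ^ 2))) (hAm : MeasurableSet A) :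
    ENNReal.ofReal (mA * β / 8) ≤ ∫⁻ y in A, volume (Xset e E1 x0 r R η j0 y) := by
  have hmA0 : 0 < mA := lt_of_lt_of_le (by positivity) hmA
  set B : Fin n → Vec n → ℝ≥0∞ := fun j y =>
    ∫⁻ x in {x : Vec n | R * r j ≤ |⟪x - x0.1, e j⟫|},
      E1.indicator 1 (x, x0.2 + (-1) * ‖y - x0.1‖ ^ 2 + -(-1) * ‖x - y‖ ^ 2) with hB
  have hBm : ∀ j, Measurable (B j) := by
    intro j
    have hm : Measurable (fun p : Vec n × Vec n =>
      E1.indicator (1 : Pt n → ℝ≥0∞) (p.2, x0.2 + (-1) * ‖p.1 - x0.1‖ ^ 2 + -(-1) * ‖p.2 - p.1‖ ^ 2)) :=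
      (measurable_one.indicator hE1).comp (by fun_prop)
    exact hm.lintegral_prod_right'
  have hBint : ∀ j, ∫⁻ y in A, B j y ≤ ENNReal.ofReal (2 ^ n * p * α * β / (4 * R * ε)) := by
    intro j
    have hRj : 0 < R * r j := mul_pos (by linarith) (hr j)
    have h1 := two_step e c rs hrs j x0 (R * r j) hRj (-1) (by simp) (E1.indicator 1)
      (measurable_one.indicator hE1)
    have h2 : ∫⁻ y in A, B j y ≤ ∫⁻ y in obox e c rs, B j y := lintegral_mono_set hAc
    refine (h2.trans h1).trans ?_
    rw [lintegral_indicator_one hE1]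
    have hP0 : 0 < ∏ j, rs j := Finset.prod_pos fun j _ => hrs j
    calc _ ≤ ENNReal.ofReal ((∏ i, (2 * rs i)) / (4 * rs j * (R * r j))) * ENNReal.ofReal a := by gcongr
      _ = ENNReal.ofReal ((∏ i, (2 * rs i)) / (4 * rs j * (R * r j)) * a) := by
          rw [← ENNReal.ofReal_mul]
          exact div_nonneg (Finset.prod_nonneg fun j _ => by have := hrs j; positivity)
            (by have := hrs j; positivity)
      _ ≤ _ := by
          apply ENNReal.ofReal_le_ofReal
          rw [Finset.prod_mul_distrib]
          simp only [Finset.prod_const, Finset.card_univ, Fintype.card_fin]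
          have h3 : 4 * rs j * (R * r j) = 4 * R * ρ := by rw [← hrr j]; ring
          have h4 : a = β * ρ / ε := by field_simp; linarith
          have h5 : 2 ^ n * (∏ j, rs j) / (4 * R * ρ) * (β * ρ / ε) =
            2 ^ n * (∏ j, rs j) * β / (4 * R * ε) := by field_simp
          rw [h3, h4, h5]
          have : 0 < R := by linarith
          rw [mul_assoc (2 ^ n) p]
          gcongr
  set slab : Set (Vec n) := obox e x0.1 (fun j => if j = j0 then η * r j else R * r j) with hslab
  have hslabv : volume slab ≤ ENNReal.ofReal (β / 16) := by
    rw [hslab, volume_obox]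
    · apply ENNReal.ofReal_le_ofReal
      refine (prod_ite_le r hr R η hR1 hη j0).trans ?_
      calc _ ≤ 2 ^ n * η * R ^ n * (q * β) := by
            have : 0 < R := by linarith
            gcongr
        _ = 2 ^ n * η * R ^ n * q * β := by ring
        _ ≤ 1 / 16 * β := by gcongr
        _ = β / 16 := by ring
    · intro j; have := hr j; have : 0 < R := by linarith
      split_ifs <;> positivity
  have hpt : ∀ y ∈ A, ENNReal.ofReal (β / 4) ≤
      volume (Xset e E1 x0 r R η j0 y) + (ENNReal.ofReal (β / 16) + ∑ j, B j y) := by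
    intro y hy
    refine (hsec y hy).trans ?_
    set V := psec 1 E1 (y, x0.2 + (-1) * ‖y - x0.1‖ ^ 2) with hV
    have hVm : MeasurableSet V := measurableSet_psec 1 hE1 _
    have hcov : V ⊆ Xset e E1 x0 r R η j0 y ∪ (slab ∪ ⋃ j, V ∩ {x : Vec n | R * r j ≤ |⟪x - x0.1, e j⟫|}) := by
      intro x hx
      by_cases h1 : ∃ j, R * r j ≤ |⟪x - x0.1, e j⟫|
      · obtain ⟨j, hj⟩ := h1
        exact Or.inr (Or.inr (Set.mem_iUnion.2 ⟨j, hx, hj⟩))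
      · push Not at h1
        by_cases h2 : η * r j0 ≤ |⟪x - x0.1, e j0⟫|
        · exact Or.inl ⟨hx, h1, h2⟩
        · refine Or.inr (Or.inl ?_)
          intro j
          dsimp only
          split_ifs with h3
          · subst h3; exact (not_le.1 h2).le
          · exact (h1 j).le
    refine (measure_mono hcov).trans ((measure_union_le _ _).trans ?_)
    gcongr
    refine (measure_union_le _ _).trans ?_
    gcongr
    refine (measure_iUnion_fintype_le _ _).trans ?_
    refine Finset.sum_le_sum fun j _ => ?_
    have hmj : MeasurableSet {x : Vec n | R * r j ≤ |⟪x - x0.1, e j⟫|} :=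
      measurableSet_le measurable_const (by fun_prop)
    rw [hB, ← Measure.restrict_apply' hmj, ← lintegral_indicator_one hVm]
    refine lintegral_mono fun x => le_of_eq ?_
    simp only [neg_neg]
    rfl
  have hint : ENNReal.ofReal (β / 4) * ENNReal.ofReal mA ≤
      (∫⁻ y in A, volume (Xset e E1 x0 r R η j0 y)) +
        (ENNReal.ofReal (β / 16) * ENNReal.ofReal mA + ENNReal.ofReal (mA * β / 16)) := by
    calc _ = ∫⁻ y in A, ENNReal.ofReal (β / 4) := by simp [hVA]
      _ ≤ ∫⁻ y in A, (volume (Xset e E1 x0 r R η j0 y) + (ENNReal.ofReal (β / 16) + ∑ j, B j y)) :=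
          setLIntegral_mono' hAm hpt
      _ = (∫⁻ y in A, volume (Xset e E1 x0 r R η j0 y)) +
        (ENNReal.ofReal (β / 16) * ENNReal.ofReal mA + ∑ j, ∫⁻ y in A, B j y) := by
          rw [lintegral_add_right, lintegral_add_left measurable_const, lintegral_finsetSum _ fun j _ => hBm j]
          · simp [hVA]
          · exact measurable_const.add (Finset.measurable_sum _ fun j _ => hBm j)
      _ ≤ _ := by
          gcongr
          calc _ ≤ ∑ j : Fin n, ENNReal.ofReal (2 ^ n * p * α * β / (4 * R * ε)) :=
                Finset.sum_le_sum fun j _ => hBint j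
            _ = ENNReal.ofReal (n * (2 ^ n * p * α * β / (4 * R * ε))) := by
                rw [Finset.sum_const, Finset.card_univ, Fintype.card_fin, nsmul_eq_mul,
                  ENNReal.ofReal_mul (by positivity), ENNReal.ofReal_natCast]
            _ ≤ _ := by
                apply ENNReal.ofReal_le_ofReal
                have hRp : 0 < R := by linarith
                rw [← mul_div_assoc, div_le_iff₀ (by positivity)]
                have h1 : n * (2 ^ n * p * α * β) * 2 ^ 10 ≤ R * ε * (α * β) := by
                  calc n * (2 ^ n * p * α * β) * 2 ^ 10 = (n * 2 ^ n * p * 2 ^ 10) * (α * β) := by ring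
                    _ ≤ _ := by gcongr
                have h2 : R * ε * β * (α / 32) ≤ R * ε * β * mA := by gcongr
                nlinarith [mul_pos (mul_pos hRp hε) (mul_pos hα hβ)]
  have hfin : ENNReal.ofReal (mA * β / 8) + ENNReal.ofReal (mA * β / 8) ≤
      (∫⁻ y in A, volume (Xset e E1 x0 r R η j0 y)) + ENNReal.ofReal (mA * β / 8) := by
    rw [← ENNReal.ofReal_mul (by positivity), ← ENNReal.ofReal_mul (by positivity),
      ← ENNReal.ofReal_add (by positivity) (by positivity)] at hint
    rw [← ENNReal.ofReal_add (by positivity) (by positivity)]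
    convert hint using 2
    · ring_nf
    · ring_nf
  exact (ENNReal.add_le_add_iff_right ENNReal.ofReal_ne_top).1 hfin


def nearS {n : ℕ} (e : OrthonormalBasis (Fin n) ℝ (Vec n)) (c : Vec n) (r : Fin n → ℝ) : Set (Vec n) :=
  {y | ∀ j, |⟪y - c, e j⟫| < r j}

lemma measurableSet_nearS {n : ℕ} (e : OrthonormalBasis (Fin n) ℝ (Vec n)) (c : Vec n)
    (r : Fin n → ℝ) : MeasurableSet (nearS e c r) := by
  unfold nearS
  rw [Set.ofPred_forall]
  exact MeasurableSet.iInter fun j => measurableSet_lt (by fun_prop) measurable_const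

lemma step2b {n : ℕ} {F : Set (Pt n)} (hF : MeasurableSet F)
    (e : OrthonormalBasis (Fin n) ℝ (Vec n)) (c : Vec n) (yh : Pt n) (r rs : Fin n → ℝ)
    (hr : ∀ j, 0 < r j) (hrs : ∀ j, 0 < rs j) {ρ : ℝ} (hρ : 0 < ρ) (hrr : ∀ j, r j * rs j = ρ)
    {b α β ε q R R2 : ℝ} (hα : 0 < α) (hβ : 0 < β) (hε : 0 < ε) (hq : 0 < q)
    (hFb : volume F ≤ ENNReal.ofReal b) (hbα : b * ε = α * ρ)
    (hQ : ∏ j, r j ≤ q * β) (hR1 : 1 ≤ R) (hR20 : 0 < R2)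
    (hR2 : n * 2 ^ n * R ^ n * q * 2 ^ 5 ≤ R2 * ε)
    {X : Set (Vec n)} (hX : MeasurableSet X) (hXc : X ⊆ obox e c (fun j => R * r j))
    (hsec : ∀ x ∈ X, ENNReal.ofReal (α / 2) ≤
      volume (psec (-1) F (x, yh.2 + 1 * ‖x - yh.1‖ ^ 2))) :
    ENNReal.ofReal (α / 2) * volume X ≤
      (∫⁻ x in X, volume (psec (-1) F (x, yh.2 + 1 * ‖x - yh.1‖ ^ 2) ∩
        nearS e yh.1 (fun j => R2 * rs j))) + ENNReal.ofReal (α * β / 32) := by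
  have hRp : 0 < R := by linarith
  set B : Fin n → Vec n → ℝ≥0∞ := fun j x =>
    ∫⁻ y in {y : Vec n | R2 * rs j ≤ |⟪y - yh.1, e j⟫|},
      F.indicator 1 (y, yh.2 + 1 * ‖x - yh.1‖ ^ 2 + (-1) * ‖y - x‖ ^ 2) with hB
  have hBm : ∀ j, Measurable (B j) := by
    intro j
    have hm : Measurable (fun p : Vec n × Vec n =>
      F.indicator (1 : Pt n → ℝ≥0∞) (p.2, yh.2 + 1 * ‖p.1 - yh.1‖ ^ 2 + (-1) * ‖p.2 - p.1‖ ^ 2)) :=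
      (measurable_one.indicator hF).comp (by fun_prop)
    exact hm.lintegral_prod_right'
  have hBint : ∀ j, ∫⁻ x in X, B j x ≤ ENNReal.ofReal (2 ^ n * R ^ n * q * β * α / (R2 * ε)) := by
    intro j
    have hRj : 0 < R2 * rs j := mul_pos hR20 (hrs j)
    have h1 := two_step e c (fun j => R * r j) (fun j => mul_pos hRp (hr j)) j yh (R2 * rs j) hRj 1 (by simp)
      (F.indicator 1) (measurable_one.indicator hF)
    have h2 : ∫⁻ x in X, B j x ≤ ∫⁻ x in obox e c (fun j => R * r j), B j x := lintegral_mono_set hXc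
    refine (h2.trans h1).trans ?_
    rw [lintegral_indicator_one hF]
    have hP0 : 0 < ∏ j, r j := Finset.prod_pos fun j _ => hr j
    calc _ ≤ ENNReal.ofReal ((∏ i, (2 * (R * r i))) / (4 * (R * r j) * (R2 * rs j))) * ENNReal.ofReal b := by gcongr
      _ = ENNReal.ofReal ((∏ i, (2 * (R * r i))) / (4 * (R * r j) * (R2 * rs j)) * b) := by
          rw [← ENNReal.ofReal_mul]
          exact div_nonneg (Finset.prod_nonneg fun j _ => by have := hr j; positivity)
            (by have := hrs j; have := hr j; positivity)
      _ ≤ _ := by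
          apply ENNReal.ofReal_le_ofReal
          rw [Finset.prod_mul_distrib, Finset.prod_mul_distrib]
          simp only [Finset.prod_const, Finset.card_univ, Fintype.card_fin]
          have h3 : 4 * (R * r j) * (R2 * rs j) = 4 * R * R2 * ρ := by rw [← hrr j]; ring
          have h4 : b = α * ρ / ε := by field_simp; linarith
          have h5 : 2 ^ n * (R ^ n * ∏ j, r j) / (4 * R * R2 * ρ) * (α * ρ / ε) =
            2 ^ n * R ^ n * (∏ j, r j) * α / (4 * R * (R2 * ε)) := by field_simp
          rw [h3, h4, h5]
          rw [mul_assoc (2 ^ n * R ^ n) q]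
          refine div_le_div₀ (by positivity) (by gcongr) (by positivity) ?_
          nlinarith [mul_pos hR20 hε]
  have hpt : ∀ x ∈ X, ENNReal.ofReal (α / 2) ≤
      volume (psec (-1) F (x, yh.2 + 1 * ‖x - yh.1‖ ^ 2) ∩
        nearS e yh.1 (fun j => R2 * rs j)) + ∑ j, B j x := by
    intro x hx
    refine (hsec x hx).trans ?_
    set V := psec (-1) F (x, yh.2 + 1 * ‖x - yh.1‖ ^ 2) with hV
    have hVm : MeasurableSet V := measurableSet_psec (-1) hF _
    have hcov : V ⊆ (V ∩ nearS e yh.1 (fun j => R2 * rs j)) ∪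
        ⋃ j, V ∩ {y : Vec n | R2 * rs j ≤ |⟪y - yh.1, e j⟫|} := by
      intro y hy
      by_cases h1 : ∃ j, R2 * rs j ≤ |⟪y - yh.1, e j⟫|
      · obtain ⟨j, hj⟩ := h1
        exact Or.inr (Set.mem_iUnion.2 ⟨j, hy, hj⟩)
      · push Not at h1
        exact Or.inl ⟨hy, h1⟩
    refine (measure_mono hcov).trans ((measure_union_le _ _).trans ?_)
    gcongr
    refine (measure_iUnion_fintype_le _ _).trans ?_
    refine Finset.sum_le_sum fun j _ => ?_
    have hmj : MeasurableSet {y : Vec n | R2 * rs j ≤ |⟪y - yh.1, e j⟫|} :=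
      measurableSet_le measurable_const (by fun_prop)
    rw [hB, ← Measure.restrict_apply' hmj, ← lintegral_indicator_one hVm]
    exact le_rfl
  calc _ = ∫⁻ x in X, ENNReal.ofReal (α / 2) := by simp
    _ ≤ ∫⁻ x in X, (volume (psec (-1) F (x, yh.2 + 1 * ‖x - yh.1‖ ^ 2) ∩
        nearS e yh.1 (fun j => R2 * rs j)) + ∑ j, B j x) := setLIntegral_mono' hX hpt
    _ = (∫⁻ x in X, volume (psec (-1) F (x, yh.2 + 1 * ‖x - yh.1‖ ^ 2) ∩
        nearS e yh.1 (fun j => R2 * rs j))) + ∑ j, ∫⁻ x in X, B j x := by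
          rw [lintegral_add_right, lintegral_finsetSum _ fun j _ => hBm j]
          exact Finset.measurable_sum _ fun j _ => hBm j
    _ ≤ _ := by
          gcongr
          calc _ ≤ ∑ j : Fin n, ENNReal.ofReal (2 ^ n * R ^ n * q * β * α / (R2 * ε)) :=
                Finset.sum_le_sum fun j _ => hBint j
            _ = ENNReal.ofReal (n * (2 ^ n * R ^ n * q * β * α / (R2 * ε))) := by
                rw [Finset.sum_const, Finset.card_univ, Fintype.card_fin, nsmul_eq_mul,
                  ENNReal.ofReal_mul (by positivity), ENNReal.ofReal_natCast]
            _ ≤ _ := by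
                apply ENNReal.ofReal_le_ofReal
                rw [← mul_div_assoc, div_le_iff₀ (by positivity)]
                have h1 : n * (2 ^ n * R ^ n * q * β * α) * 2 ^ 5 ≤ R2 * ε * (α * β) := by
                  calc n * (2 ^ n * R ^ n * q * β * α) * 2 ^ 5 = (n * 2 ^ n * R ^ n * q * 2 ^ 5) * (α * β) := by ring
                    _ ≤ _ := by gcongr
                linarith

/-- incidence defect -/
def sg {n : ℕ} (x y : Pt n) : ℝ := x.2 - y.2 - ‖x.1 - y.1‖ ^ 2

lemma sg_four {n : ℕ} (x y xb yb : Pt n) :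
    sg x y - sg x yb - sg xb y + sg xb yb = 2 * ⟪x.1 - xb.1, y.1 - yb.1⟫ := by
  unfold sg
  rw [@norm_sub_sq_real, @norm_sub_sq_real, @norm_sub_sq_real, @norm_sub_sq_real,
    inner_sub_left, inner_sub_right, inner_sub_right]
  ring

lemma inner_box {n : ℕ} (e : OrthonormalBasis (Fin n) ℝ (Vec n)) (u v : Vec n) (r rs : Fin n → ℝ)
    {ρ A B : ℝ} (hrr : ∀ j, r j * rs j = ρ)
    (hu : ∀ j, |⟪u, e j⟫| ≤ A * r j) (hv : ∀ j, |⟪v, e j⟫| ≤ B * rs j) :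
    |⟪u, v⟫| ≤ n * A * B * ρ := by
  rw [inner_ocoord e]
  refine (Finset.abs_sum_le_sum_abs _ _).trans ?_
  calc _ ≤ ∑ j : Fin n, A * B * ρ := by
        refine Finset.sum_le_sum fun j _ => ?_
        rw [abs_mul]
        calc _ ≤ (A * r j) * (B * rs j) :=
              mul_le_mul (hu j) (hv j) (abs_nonneg _) ((abs_nonneg _).trans (hu j))
          _ = A * B * ρ := by rw [← hrr j]; ring
    _ = _ := by simp; ring

/-- boxes -/
def bxE {n : ℕ} (e : OrthonormalBasis (Fin n) ℝ (Vec n)) (c : Vec n) (y0 : Pt n) (r : Fin n → ℝ)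
    (t : ℝ) : Set (Pt n) := {x | x.1 ∈ obox e c r ∧ |sg x y0| ≤ t}

def bxF {n : ℕ} (e : OrthonormalBasis (Fin n) ℝ (Vec n)) (c : Vec n) (x0 : Pt n) (r : Fin n → ℝ)
    (t : ℝ) : Set (Pt n) := {y | y.1 ∈ obox e c r ∧ |sg x0 y| ≤ t}

lemma measurable_sg_left {n : ℕ} (y0 : Pt n) : Measurable (fun x : Pt n => sg x y0) := by
  unfold sg; fun_prop
lemma measurable_sg_right {n : ℕ} (x0 : Pt n) : Measurable (fun y : Pt n => sg x0 y) := by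
  unfold sg; fun_prop

lemma measurableSet_bxE {n : ℕ} (e : OrthonormalBasis (Fin n) ℝ (Vec n)) (c : Vec n) (y0 : Pt n)
    (r : Fin n → ℝ) (t : ℝ) : MeasurableSet (bxE e c y0 r t) :=
  ((measurableSet_obox e c r).preimage measurable_fst).inter
    (measurableSet_le (measurable_sg_left y0).abs measurable_const)
lemma measurableSet_bxF {n : ℕ} (e : OrthonormalBasis (Fin n) ℝ (Vec n)) (c : Vec n) (x0 : Pt n)
    (r : Fin n → ℝ) (t : ℝ) : MeasurableSet (bxF e c x0 r t) :=
  ((measurableSet_obox e c r).preimage measurable_fst).inter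
    (measurableSet_le (measurable_sg_right x0).abs measurable_const)


lemma step2 {n : ℕ} (j0 : Fin n) {E F : Set (Pt n)} (hE : MeasurableSet E) (hF : MeasurableSet F)
    (e : OrthonormalBasis (Fin n) ℝ (Vec n)) (x0 y0 : Pt n) (hinc : sg x0 y0 = 0) (r rs : Fin n → ℝ)
    (hr : ∀ j, 0 < r j) (hrs : ∀ j, 0 < rs j) {ρ : ℝ} (hρ : 0 < ρ) (hrr : ∀ j, r j * rs j = ρ)
    {A : Set (Vec n)} (hAm : MeasurableSet A) (hAf : volume A ≠ ⊤) (hAc : A ⊆ obox e y0.1 rs)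
    {a b α β ε p q R R2 η : ℝ} (ha : 0 < a) (hα : 0 < α) (hβ : 0 < β) (hε : 0 < ε)
    (hp : 0 < p) (hq : 0 < q)
    (hVA : ENNReal.ofReal (α / 32) ≤ volume A)
    (hEa : volume E ≤ ENNReal.ofReal a) (haβ : a * ε = β * ρ)
    (hFb : volume F ≤ ENNReal.ofReal b) (hbα : b * ε = α * ρ)
    (hP : ∏ j, rs j ≤ p * α) (hQ : ∏ j, r j ≤ q * β)
    (hR1 : 1 ≤ R) (hR : n * 2 ^ n * p * 2 ^ 10 ≤ R * ε) (hη : 0 < η)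
    (hηq : 2 ^ n * η * R ^ n * q ≤ 1 / 16) (hR20 : 0 < R2)
    (hR2 : n * 2 ^ n * R ^ n * q * 2 ^ 5 ≤ R2 * ε)
    (hsec : ∀ y ∈ A, ENNReal.ofReal (β / 4) ≤
      volume (psec 1 (ref1 E F α) (y, x0.2 + (-1) * ‖y - x0.1‖ ^ 2))) :
    ENNReal.ofReal (α * β * ρ * η / (2 ^ (n + 8) * p)) ≤
      Lam (E ∩ bxE e x0.1 y0 (fun j => 2 * n * R * (R2 + 2) * r j) (2 * n * R * (R2 + 2) * ρ))
        (F ∩ bxF e y0.1 x0 (fun j => 2 * n * R * (R2 + 2) * rs j) (2 * n * R * (R2 + 2) * ρ)) := by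
  have hn1 : (1 : ℝ) ≤ n := by
    have := j0.2
    exact_mod_cast (by omega : 1 ≤ n)
  have hRp : 0 < R := by linarith
  set R3 : ℝ := 2 * n * R * (R2 + 2) with hR3
  have hnR : 1 ≤ n * R := one_le_mul_of_one_le_of_one_le hn1 hR1
  have hR3a : R ≤ R3 := by
    have h1 : R ≤ n * R := le_mul_of_one_le_left hRp.le hn1
    have : R3 = (n * R) * (2 * (R2 + 2)) := by rw [hR3]; ring
    rw [this]; nlinarith
  have hR3b : R2 + 1 ≤ R3 := by
    have : R3 = (n * R) * (2 * (R2 + 2)) := by rw [hR3]; ring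
    rw [this]; nlinarith
  set mA : ℝ := (volume A).toReal with hmAd
  have hVA' : volume A = ENNReal.ofReal mA := (ENNReal.ofReal_toReal hAf).symm
  have hmA : α / 32 ≤ mA := by
    rw [hmAd]; exact (ENNReal.ofReal_le_iff_le_toReal hAf).1 hVA
  have hmA0 : 0 < mA := lt_of_lt_of_le (by positivity) hmA
  set E1 := ref1 E F α with hE1
  have hE1m : MeasurableSet E1 := measurableSet_ref1 hE hF _
  have hE1a : volume E1 ≤ ENNReal.ofReal a := (measure_mono Set.inter_subset_left).trans hEa
  have h2a := step2a j0 hE1m e x0 y0.1 r rs hr hrs hρ hrr hAc ha hα hβ hε hp hVA' hmA hE1a haβ hP hQ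
    hR1 hR hη hηq hsec hAm
  set E' := E ∩ bxE e x0.1 y0 (fun j => R3 * r j) (R3 * ρ) with hE'
  set F' := F ∩ bxF e y0.1 x0 (fun j => R3 * rs j) (R3 * ρ) with hF'
  have hE'm : MeasurableSet E' := hE.inter (measurableSet_bxE e _ _ _ _)
  have hF'm : MeasurableSet F' := hF.inter (measurableSet_bxF e _ _ _ _)
  set H : Pt n → ℝ≥0∞ := E'.indicator (fun x => volume (psec (-1) F' x)) with hH
  have hHm : Measurable H := (measurable_vol_psec (-1) hF'm).indicator hE'm
  have hHint : ∫⁻ x, H x = Lam E' F' := by rw [hH, lintegral_indicator hE'm]; rfl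
  -- pointwise
  have hpt : ∀ y ∈ A, ∀ x ∈ Xset e E1 x0 r R η j0 y,
      volume (psec (-1) F (x, x0.2 + (-1) * ‖y - x0.1‖ ^ 2 + 1 * ‖x - y‖ ^ 2) ∩
        nearS e y (fun j => R2 * rs j)) ≤
      H (x, x0.2 + (-1) * ‖y - x0.1‖ ^ 2 + 1 * ‖x - y‖ ^ 2) := by
    intro y hy x hx
    obtain ⟨hxE, hxb, -⟩ := hx
    set z : Pt n := (x, x0.2 + (-1) * ‖y - x0.1‖ ^ 2 + 1 * ‖x - y‖ ^ 2) with hz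
    set yh : Pt n := (y, x0.2 + (-1) * ‖y - x0.1‖ ^ 2) with hyh
    have s1 : sg z yh = 0 := by simp [sg, hz, hyh]
    have s2 : sg x0 yh = 0 := by simp [sg, hyh, norm_sub_rev]
    have i1 : |⟪z.1 - x0.1, yh.1 - y0.1⟫| ≤ n * R * 1 * ρ :=
      inner_box e _ _ r rs hrr (fun j => (hxb j).le) (fun j => by rw [one_mul]; exact hAc hy j)
    have s3 := sg_four z yh x0 y0
    rw [s1, s2, hinc] at s3
    have s4 : |sg z y0| ≤ 2 * n * R * ρ := by
      have : sg z y0 = - (2 * ⟪z.1 - x0.1, yh.1 - y0.1⟫) := by linarith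
      rw [this, abs_neg, abs_mul, abs_two]; linarith
    have hzE : z ∈ E' := by
      refine ⟨hxE.1, ?_, ?_⟩
      · intro j
        refine (hxb j).le.trans ?_
        exact mul_le_mul_of_nonneg_right hR3a (hr j).le
      · refine s4.trans ?_
        rw [hR3]
        have : 0 < n * R * ρ := by positivity
        nlinarith
    rw [hH, Set.indicator_of_mem hzE]
    refine measure_mono ?_
    rintro w ⟨hwF, hwn⟩
    set wh : Pt n := (w, z.2 + (-1) * ‖w - z.1‖ ^ 2) with hwh
    have t1 : sg z wh = 0 := by simp [sg, hwh, norm_sub_rev]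
    have hwy : ∀ j, |⟪w - y0.1, e j⟫| ≤ (R2 + 1) * rs j := by
      intro j
      have h1 : |⟪w - y, e j⟫| < R2 * rs j := hwn j
      have h2 : |⟪y - y0.1, e j⟫| ≤ rs j := hAc hy j
      have h3 : ⟪w - y0.1, e j⟫ = ⟪w - y, e j⟫ + ⟪y - y0.1, e j⟫ := by
        rw [← inner_add_left]; simp
      rw [h3]
      refine (abs_add_le _ _).trans ?_
      linarith
    have i2 : |⟪z.1 - x0.1, wh.1 - y0.1⟫| ≤ n * R * (R2 + 1) * ρ :=
      inner_box e _ _ r rs hrr (fun j => (hxb j).le) hwy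
    have t3 := sg_four z wh x0 y0
    rw [t1, hinc] at t3
    refine ⟨hwF, ?_, ?_⟩
    · intro j
      refine (hwy j).trans ?_
      exact mul_le_mul_of_nonneg_right hR3b (hrs j).le
    · have : sg x0 wh = - (2 * ⟪z.1 - x0.1, wh.1 - y0.1⟫) - sg z y0 := by linarith
      have h5 : |sg x0 wh| ≤ R3 * ρ := by
        rw [this]
        refine (abs_sub _ _).trans ?_
        rw [abs_neg, abs_mul, abs_two, hR3]
        nlinarith
      exact h5
  have hb : ∀ y ∈ A, ENNReal.ofReal (α / 2) * volume (Xset e E1 x0 r R η j0 y) ≤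
      (∫⁻ x in Xset e E1 x0 r R η j0 y, H (x, x0.2 + (-1) * ‖y - x0.1‖ ^ 2 + 1 * ‖x - y‖ ^ 2)) +
        ENNReal.ofReal (α * β / 32) := by
    intro y hy
    have hXm := measurableSet_Xset e hE1m x0 r R η j0 y
    have h1 := step2b hF e x0.1 (y, x0.2 + (-1) * ‖y - x0.1‖ ^ 2) r rs hr hrs hρ hrr hα hβ hε hq hFb hbα hQ
      hR1 hR20 hR2 hXm (fun x hx j => (hx.2.1 j).le) (fun x hx => hx.1.2)
    refine h1.trans ?_
    gcongr ?_ + _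
    exact setLIntegral_mono' hXm (hpt y hy)
  have h2 : ∫⁻ y in A, ∫⁻ x in Xset e E1 x0 r R η j0 y,
      H (x, x0.2 + (-1) * ‖y - x0.1‖ ^ 2 + 1 * ‖x - y‖ ^ 2) ≤
      ENNReal.ofReal (2 ^ n * (∏ i, rs i) / (4 * ρ * η)) * Lam E' F' := by
    have h3 := two_step e y0.1 rs hrs j0 x0 (η * r j0) (mul_pos hη (hr j0)) (-1) (by simp) H hHm
    rw [hHint, Finset.prod_mul_distrib, show 4 * rs j0 * (η * r j0) = 4 * ρ * η by rw [← hrr j0]; ring] at h3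
    simp only [Finset.prod_const, Finset.card_univ, Fintype.card_fin, neg_neg] at h3
    refine le_trans ?_ h3
    refine (lintegral_mono_set hAc).trans ?_
    refine lintegral_mono fun y => ?_
    exact lintegral_mono_set fun x hx => hx.2.2
  have h4 : ENNReal.ofReal (mA * α * β / 32) + ENNReal.ofReal (mA * α * β / 32) ≤
      ENNReal.ofReal (2 ^ n * (∏ i, rs i) / (4 * ρ * η)) * Lam E' F' + ENNReal.ofReal (mA * α * β / 32) := by
    calc _ = ENNReal.ofReal (α / 2) * ENNReal.ofReal (mA * β / 8) := by
          rw [← ENNReal.ofReal_add (by positivity) (by positivity), ← ENNReal.ofReal_mul (by positivity)]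
          congr 1; ring
      _ ≤ ENNReal.ofReal (α / 2) * ∫⁻ y in A, volume (Xset e E1 x0 r R η j0 y) := by gcongr
      _ = ∫⁻ y in A, ENNReal.ofReal (α / 2) * volume (Xset e E1 x0 r R η j0 y) := by
          rw [lintegral_const_mul' _ _ ENNReal.ofReal_ne_top]
      _ ≤ ∫⁻ y in A, ((∫⁻ x in Xset e E1 x0 r R η j0 y,
            H (x, x0.2 + (-1) * ‖y - x0.1‖ ^ 2 + 1 * ‖x - y‖ ^ 2)) + ENNReal.ofReal (α * β / 32)) :=
          setLIntegral_mono' hAm hb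
      _ = (∫⁻ y in A, ∫⁻ x in Xset e E1 x0 r R η j0 y,
            H (x, x0.2 + (-1) * ‖y - x0.1‖ ^ 2 + 1 * ‖x - y‖ ^ 2)) + ENNReal.ofReal (mA * α * β / 32) := by
          rw [lintegral_add_right _ measurable_const]
          congr 1
          rw [lintegral_const, Measure.restrict_apply_univ, hVA', ← ENNReal.ofReal_mul (by positivity)]
          congr 1; ring
      _ ≤ _ := by gcongr
  have h5 := (ENNReal.add_le_add_iff_right ENNReal.ofReal_ne_top).1 h4
  have hP0 : 0 < ∏ i, rs i := Finset.prod_pos fun j _ => hrs j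
  have h6 := ENNReal.div_le_of_le_mul' h5
  rw [← ENNReal.ofReal_div_of_pos (by positivity)] at h6
  refine le_trans (ENNReal.ofReal_le_ofReal ?_) h6
  have h7 : mA * α * β / 32 / (2 ^ n * (∏ i, rs i) / (4 * ρ * η)) =
    (mA * α * β * ρ * η) / (2 ^ n * 8 * (∏ i, rs i)) := by field_simp; norm_num
  rw [h7]
  calc α * β * ρ * η / (2 ^ (n + 8) * p) = ((α / 32) * α * β * ρ * η) / (2 ^ n * 8 * (p * α)) := by
        rw [pow_add]; field_simp; norm_num
    _ ≤ _ := by gcongr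


lemma Lam_union_left {n : ℕ} {ι : Type*} [Fintype ι] (S : ι → Set (Pt n)) {E F : Set (Pt n)}
    (hES : E ⊆ ⋃ i, S i) : Lam E F ≤ ∑ i, Lam (E ∩ S i) F := by
  have h1 : E ⊆ ⋃ i, E ∩ S i := by
    rw [← Set.inter_iUnion]; exact Set.subset_inter subset_rfl hES
  unfold Lam
  refine (lintegral_mono_set h1).trans ?_
  refine (lintegral_iUnion_le _ _).trans ?_
  rw [tsum_fintype]

lemma Lam_union_right {n : ℕ} {ι : Type*} [Fintype ι] (S : ι → Set (Pt n)) {E F : Set (Pt n)}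
    (hE : MeasurableSet E) (hF : MeasurableSet F) (hS : ∀ i, MeasurableSet (S i))
    (hES : F ⊆ ⋃ i, S i) : Lam E F ≤ ∑ i, Lam E (F ∩ S i) := by
  have h1 : F ⊆ ⋃ i, F ∩ S i := by
    rw [← Set.inter_iUnion]; exact Set.subset_inter subset_rfl hES
  simp_rw [fun i => Lam_eq_swap hE (hF.inter (hS i))]
  rw [Lam_eq_swap hE hF]
  refine (lintegral_mono_set h1).trans ?_
  refine (lintegral_iUnion_le _ _).trans ?_
  rw [tsum_fintype]

lemma pigeon {n : ℕ} {ι : Type*} [Fintype ι] (S T : ι → Set (Pt n)) {E F : Set (Pt n)}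
    (hE : MeasurableSet E) (hF : MeasurableSet F) (hS : ∀ i, MeasurableSet (S i))
    (hT : ∀ i, MeasurableSet (T i)) (hES : E ⊆ ⋃ i, S i) (hFT : F ⊆ ⋃ i, T i) {l : ℝ} (hl : 0 < l)
    (h : ENNReal.ofReal l ≤ Lam E F) :
    ∃ u v, ENNReal.ofReal (l / (Fintype.card ι : ℝ) ^ 2) ≤ Lam (E ∩ S u) (F ∩ T v) := by
  by_contra hcon
  push Not at hcon
  have h1 : Lam E F ≤ ∑ u, ∑ v, Lam (E ∩ S u) (F ∩ T v) :=
    (Lam_union_left S hES).trans (Finset.sum_le_sum fun u _ => Lam_union_right T (hE.inter (hS u)) hF hT hFT)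
  have hne : Nonempty ι := by
    by_contra hem
    rw [not_nonempty_iff] at hem
    simp at h1
    rw [h1] at h
    exact absurd (ENNReal.ofReal_pos.2 hl) (not_lt.2 h)
  have h2 : ∑ u, ∑ v, Lam (E ∩ S u) (F ∩ T v) <
      ∑ u : ι, ∑ v : ι, ENNReal.ofReal (l / (Fintype.card ι : ℝ) ^ 2) := by
    refine ENNReal.sum_lt_sum_of_nonempty Finset.univ_nonempty fun u _ => ?_
    exact ENNReal.sum_lt_sum_of_nonempty Finset.univ_nonempty fun v _ => hcon u v
  have h3 : ∑ u : ι, ∑ v : ι, ENNReal.ofReal (l / (Fintype.card ι : ℝ) ^ 2) = ENNReal.ofReal l := by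
    have hc : (0 : ℝ) < Fintype.card ι := by exact_mod_cast Fintype.card_pos
    simp only [Finset.sum_const, Finset.card_univ, nsmul_eq_mul]
    rw [← mul_assoc, ← ENNReal.ofReal_natCast, ← ENNReal.ofReal_mul hc.le, ← ENNReal.ofReal_mul (by positivity)]
    congr 1
    field_simp
  rw [h3] at h2
  exact absurd (h.trans h1) (not_le.2 h2)

lemma floor_cover {n : ℕ} {κ : Type*} (g : κ → Pt n → ℝ) (N : ℕ) {E : Set (Pt n)}
    (hg : ∀ x ∈ E, ∀ i, |g i x| ≤ N) :
    E ⊆ ⋃ u : κ → ↥(Finset.Icc (-(N : ℤ)) N), {x | ∀ i, ⌊g i x⌋ = u i} := by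
  intro x hx
  refine Set.mem_iUnion.2 ⟨fun i => ⟨⌊g i x⌋, ?_⟩, fun i => rfl⟩
  have := abs_le.1 (hg x hx i)
  rw [Finset.mem_Icc]
  refine ⟨Int.le_floor.2 (by push_cast; exact this.1), ?_⟩
  have h2 : (⌊g i x⌋ : ℝ) ≤ N := (Int.floor_le _).trans this.2
  exact_mod_cast h2

lemma measurableSet_floor {n : ℕ} {κ : Type*} [Countable κ] (g : κ → Pt n → ℝ) (hg : ∀ i, Measurable (g i))
    (u : κ → ℤ) : MeasurableSet {x | ∀ i, ⌊g i x⌋ = u i} := by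
  rw [Set.ofPred_forall]
  refine MeasurableSet.iInter fun i => ?_
  exact (hg i).floor (measurableSet_singleton (u i))

lemma floor_close {s t w : ℝ} (hw : 0 < w) (h : ⌊s / w⌋ = ⌊t / w⌋) : |s - t| < w := by
  have := Int.abs_sub_lt_one_of_floor_eq_floor h
  rw [← sub_div, abs_div, abs_of_pos hw, div_lt_one hw] at this
  exact this

lemma volume_bxE {n : ℕ} (e : OrthonormalBasis (Fin n) ℝ (Vec n)) (c : Vec n) (y0 : Pt n)
    (r : Fin n → ℝ) (hr : ∀ j, 0 ≤ r j) (t : ℝ) :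
    volume (bxE e c y0 r t) = ENNReal.ofReal (∏ j, (2 * r j)) * ENNReal.ofReal (2 * t) := by
  rw [Measure.volume_eq_prod, Measure.prod_apply (measurableSet_bxE e c y0 r t)]
  have h1 : ∀ x : Vec n, volume (Prod.mk x ⁻¹' bxE e c y0 r t) =
      (obox e c r).indicator (fun _ => ENNReal.ofReal (2 * t)) x := by
    intro x
    by_cases hx : x ∈ obox e c r
    · rw [Set.indicator_of_mem hx]
      have : Prod.mk x ⁻¹' bxE e c y0 r t =
          Set.Icc (y0.2 + ‖x - y0.1‖ ^ 2 - t) (y0.2 + ‖x - y0.1‖ ^ 2 + t) := by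
        ext s
        simp only [bxE, sg, Set.mem_preimage, Set.mem_ofPred_eq, hx, true_and, abs_le, Set.mem_Icc]
        constructor <;> rintro ⟨h1, h2⟩ <;> constructor <;> linarith
      rw [this, Real.volume_Icc]; congr 1; ring
    · rw [Set.indicator_of_notMem hx]
      have : Prod.mk x ⁻¹' bxE e c y0 r t = ∅ := by
        ext s
        simp [bxE, hx]
      rw [this, measure_empty]
  simp_rw [h1]
  rw [lintegral_indicator (measurableSet_obox e c r), lintegral_const, Measure.restrict_apply_univ,
    volume_obox e c r hr, mul_comm]

lemma volume_bxF {n : ℕ} (e : OrthonormalBasis (Fin n) ℝ (Vec n)) (c : Vec n) (y0 : Pt n)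
    (r : Fin n → ℝ) (hr : ∀ j, 0 ≤ r j) (t : ℝ) :
    volume (bxF e c y0 r t) = ENNReal.ofReal (∏ j, (2 * r j)) * ENNReal.ofReal (2 * t) := by
  rw [Measure.volume_eq_prod, Measure.prod_apply (measurableSet_bxF e c y0 r t)]
  have h1 : ∀ x : Vec n, volume (Prod.mk x ⁻¹' bxF e c y0 r t) =
      (obox e c r).indicator (fun _ => ENNReal.ofReal (2 * t)) x := by
    intro x
    by_cases hx : x ∈ obox e c r
    · rw [Set.indicator_of_mem hx]
      have : Prod.mk x ⁻¹' bxF e c y0 r t =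
          Set.Icc (y0.2 - ‖y0.1 - x‖ ^ 2 - t) (y0.2 - ‖y0.1 - x‖ ^ 2 + t) := by
        ext s
        simp only [bxF, sg, Set.mem_preimage, Set.mem_ofPred_eq, hx, true_and, abs_le, Set.mem_Icc]
        constructor <;> rintro ⟨h1, h2⟩ <;> constructor <;> linarith
      rw [this, Real.volume_Icc]; congr 1; ring
    · rw [Set.indicator_of_notMem hx]
      have : Prod.mk x ⁻¹' bxF e c y0 r t = ∅ := by
        ext s
        simp [bxF, hx]
      rw [this, measure_empty]
  simp_rw [h1]
  rw [lintegral_indicator (measurableSet_obox e c r), lintegral_const, Measure.restrict_apply_univ,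
    volume_obox e c r hr, mul_comm]


lemma prod_two_smul {n : ℕ} (k : ℝ) (r : Fin n → ℝ) : ∏ j, (2 * (k * r j)) = 2 ^ n * k ^ n * ∏ j, r j := by
  rw [Finset.prod_mul_distrib, Finset.prod_mul_distrib]
  simp only [Finset.prod_const, Finset.card_univ, Fintype.card_fin]
  ring

lemma step3a {n : ℕ} {E F E2 F2 : Set (Pt n)} (hE2 : MeasurableSet E2) (hF2 : MeasurableSet F2)
    (hEE : E2 ⊆ E) (hFF : F2 ⊆ F)
    (e : OrthonormalBasis (Fin n) ℝ (Vec n)) (x0 y0 : Pt n) (r rs : Fin n → ℝ)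
    (hr : ∀ j, 0 < r j) (hrs : ∀ j, 0 < rs j) {ρ : ℝ} (hρ : 0 < ρ) (hrr : ∀ j, r j * rs j = ρ)
    {R3 θ κ l : ℝ} (hθ : 0 < θ) (hκ : 0 < κ) (hθκ : θ * (1 + 2 * n * R3) ≤ κ ^ 2)
    (hθκ' : θ ≤ κ) (hκ1 : κ ≤ 1) (hl : 0 < l)
    (hEc : ∀ x ∈ E2, ∀ x' ∈ E2, (∀ j, |⟪x.1 - x'.1, e j⟫| < θ * r j) ∧ |sg x y0 - sg x' y0| < θ * ρ)
    (hFc : ∀ y ∈ F2, ∀ y' ∈ F2, (∀ j, |⟪y.1 - y'.1, e j⟫| < θ * rs j) ∧ |sg x0 y - sg x0 y'| < θ * ρ)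
    (hE0 : ∀ x ∈ E2, ∀ j, |⟪x.1 - x0.1, e j⟫| ≤ R3 * r j)
    (hF0 : ∀ y ∈ F2, ∀ j, |⟪y.1 - y0.1, e j⟫| ≤ R3 * rs j)
    (h : ENNReal.ofReal l ≤ Lam E2 F2) :
    ∃ zb : Pt n × Pt n, IsBallParams n zb e (fun j => κ * r j) (fun j => κ * rs j) (κ ^ 2 * ρ) ∧
      volume (Prod.fst '' ballI n zb e (fun j => κ * r j) (fun j => κ * rs j) (κ ^ 2 * ρ)) ≤
        ENNReal.ofReal (2 ^ (n + 1) * κ ^ (n + 2) * (∏ j, r j) * ρ) ∧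
      volume (Prod.snd '' ballI n zb e (fun j => κ * r j) (fun j => κ * rs j) (κ ^ 2 * ρ)) ≤
        ENNReal.ofReal (2 ^ (n + 1) * κ ^ (n + 2) * (∏ j, rs j) * ρ) ∧
      ENNReal.ofReal (l / (2 ^ n * ∏ j, rs j)) ≤
        volume (E ∩ Prod.fst '' ballI n zb e (fun j => κ * r j) (fun j => κ * rs j) (κ ^ 2 * ρ)) ∧
      ENNReal.ofReal (l / (2 ^ n * ∏ j, r j)) ≤
        volume (F ∩ Prod.snd '' ballI n zb e (fun j => κ * r j) (fun j => κ * rs j) (κ ^ 2 * ρ)) := by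
  have hθ1 : θ ≤ 1 := hθκ'.trans hκ1
  have hP0 : 0 < ∏ j, rs j := Finset.prod_pos fun j _ => hrs j
  have hQ0 : 0 < ∏ j, r j := Finset.prod_pos fun j _ => hr j
  have hLpos : 0 < Lam E2 F2 := (ENNReal.ofReal_pos.2 hl).trans_le h
  -- the centre
  obtain ⟨xb, hxb, w, hw⟩ : ∃ xb ∈ E2, (psec (-1) F2 xb).Nonempty := by
    by_contra hcon
    push Not at hcon
    have : Lam E2 F2 = 0 := by
      unfold Lam
      rw [setLIntegral_congr_fun hE2 (g := fun _ => 0) (fun x hx => by simp [hcon x hx])]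
      simp
    exact hLpos.ne' this
  set yb : Pt n := (w, xb.2 + (-1) * ‖w - xb.1‖ ^ 2) with hyb
  have hybF : yb ∈ F2 := hw
  have hsb : sg xb yb = 0 := by
    simp only [sg, hyb]; rw [norm_sub_rev]; ring
  -- section bounds
  have secF : ∀ x, volume (psec (-1) F2 x) ≤ ENNReal.ofReal (2 ^ n * ∏ j, rs j) := by
    intro x
    have hsub : psec (-1) F2 x ⊆ obox e yb.1 (fun j => 1 * rs j) := by
      intro y hy j
      have := ((hFc _ hy _ hybF).1 j).le
      refine this.trans ?_
      have := hrs j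
      dsimp only; gcongr
    refine (measure_mono hsub).trans ?_
    rw [volume_obox e _ _ (fun j => by have := hrs j; positivity), prod_two_smul]
    simp
  have secE : ∀ y, volume (psec 1 E2 y) ≤ ENNReal.ofReal (2 ^ n * ∏ j, r j) := by
    intro x
    have hsub : psec 1 E2 x ⊆ obox e xb.1 (fun j => 1 * r j) := by
      intro y hy j
      have := ((hEc _ hy _ hxb).1 j).le
      refine this.trans ?_
      have := hr j
      dsimp only; gcongr
    refine (measure_mono hsub).trans ?_
    rw [volume_obox e _ _ (fun j => by have := hr j; positivity), prod_two_smul]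
    simp
  have volE : ENNReal.ofReal (l / (2 ^ n * ∏ j, rs j)) ≤ volume E2 := by
    rw [ENNReal.ofReal_div_of_pos (by positivity)]
    refine ENNReal.div_le_of_le_mul ?_
    refine h.trans ?_
    unfold Lam
    refine (lintegral_mono fun x => secF x).trans ?_
    rw [lintegral_const, Measure.restrict_apply_univ, mul_comm]
  have volF : ENNReal.ofReal (l / (2 ^ n * ∏ j, r j)) ≤ volume F2 := by
    rw [ENNReal.ofReal_div_of_pos (by positivity)]
    refine ENNReal.div_le_of_le_mul ?_
    refine h.trans ?_
    rw [Lam_eq_swap hE2 hF2]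
    refine (lintegral_mono fun x => secE x).trans ?_
    rw [lintegral_const, Measure.restrict_apply_univ, mul_comm]
  -- containment
  have hθR : θ * ρ + 2 * (n * θ * R3 * ρ) ≤ κ ^ 2 * ρ := by nlinarith
  have subE : E2 ⊆ Prod.fst '' ballI n (xb, yb) e (fun j => κ * r j) (fun j => κ * rs j) (κ ^ 2 * ρ) := by
    intro x hx
    have hc := hEc x hx xb hxb
    refine ⟨(x, (yb.1, x.2 - ‖yb.1 - x.1‖ ^ 2)), ?_, rfl⟩
    have hs : |sg x yb| < κ ^ 2 * ρ := by
      have h4 := sg_four x yb xb y0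
      have h5 := inner_box e (x.1 - xb.1) (yb.1 - y0.1) r rs hrr (fun j => (hc.1 j).le) (hF0 yb hybF)
      have h6 := abs_lt.1 hc.2
      have h7 := abs_le.1 h5
      rw [abs_lt]
      constructor <;> linarith
    refine ⟨rfl, fun j => (hc.1 j).trans_le ?_, ?_, fun j => ?_, ?_⟩
    · have := hr j; dsimp only; gcongr
    · exact hs
    · have := hrs j; simp; positivity
    · have : yb.2 = xb.2 - ‖yb.1 - xb.1‖ ^ 2 := by simp [hyb]; ring
      have h9 : x.2 - ‖yb.1 - x.1‖ ^ 2 - xb.2 + ‖yb.1 - xb.1‖ ^ 2 = sg x yb := by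
        simp only [sg]; rw [norm_sub_rev yb.1 x.1]; linarith
      dsimp only
      rw [h9]; exact hs
  have subF : F2 ⊆ Prod.snd '' ballI n (xb, yb) e (fun j => κ * r j) (fun j => κ * rs j) (κ ^ 2 * ρ) := by
    intro y hy
    have hc := hFc y hy yb hybF
    refine ⟨((xb.1, y.2 + ‖y.1 - xb.1‖ ^ 2), y), ?_, rfl⟩
    have hs : |sg xb y| < κ ^ 2 * ρ := by
      have h4 := sg_four xb y x0 yb
      have h5 := inner_box e (xb.1 - x0.1) (y.1 - yb.1) r rs hrr (hE0 xb hxb) (fun j => (hc.1 j).le)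
      have h6 := abs_lt.1 hc.2
      have h7 := abs_le.1 h5
      rw [abs_lt]
      constructor <;> linarith
    refine ⟨by simp, fun j => ?_, ?_, fun j => (hc.1 j).trans_le ?_, ?_⟩
    · have := hr j; simp; positivity
    · have : yb.2 = xb.2 - ‖yb.1 - xb.1‖ ^ 2 := by simp [hyb]; ring
      have h9 : y.2 + ‖y.1 - xb.1‖ ^ 2 - yb.2 - ‖xb.1 - yb.1‖ ^ 2 = - sg xb y := by
        simp only [sg]; rw [norm_sub_rev xb.1 y.1, norm_sub_rev xb.1 yb.1]; linarith
      dsimp only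
      rw [h9, abs_neg]; exact hs
    · have := hrs j; dsimp only; gcongr
    · have h9 : y.2 - xb.2 + ‖y.1 - xb.1‖ ^ 2 = - sg xb y := by
        simp only [sg]; rw [norm_sub_rev xb.1 y.1]; ring
      dsimp only
      rw [h9, abs_neg]; exact hs
  refine ⟨(xb, yb), ⟨by simp [hyb]; ring, by positivity, e.orthonormal, fun j => mul_pos hκ (hr j),
    fun j => mul_pos hκ (hrs j), fun j => by rw [← hrr j]; ring⟩, ?_, ?_, ?_, ?_⟩
  · have hsub : Prod.fst '' ballI n (xb, yb) e (fun j => κ * r j) (fun j => κ * rs j) (κ ^ 2 * ρ) ⊆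
        bxE e xb.1 yb (fun j => κ * r j) (κ ^ 2 * ρ) := by
      rintro _ ⟨z, hz, rfl⟩
      exact ⟨fun j => (hz.2.1 j).le, hz.2.2.1.le⟩
    refine (measure_mono hsub).trans ?_
    rw [volume_bxE _ _ _ _ (fun j => by have := hr j; positivity), prod_two_smul,
      ← ENNReal.ofReal_mul (by positivity)]
    apply ENNReal.ofReal_le_ofReal
    apply le_of_eq; ring
  · have hsub : Prod.snd '' ballI n (xb, yb) e (fun j => κ * r j) (fun j => κ * rs j) (κ ^ 2 * ρ) ⊆
        bxF e yb.1 xb (fun j => κ * rs j) (κ ^ 2 * ρ) := by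
      rintro _ ⟨z, hz, rfl⟩
      refine ⟨fun j => (hz.2.2.2.1 j).le, ?_⟩
      have h9 : z.2.2 - xb.2 + ‖z.2.1 - xb.1‖ ^ 2 = - sg xb z.2 := by
        simp only [sg]; rw [norm_sub_rev xb.1 z.2.1]; ring
      have h8 := hz.2.2.2.2.le
      dsimp only at h8
      rwa [h9, abs_neg] at h8
    refine (measure_mono hsub).trans ?_
    rw [volume_bxF _ _ _ _ (fun j => by have := hrs j; positivity), prod_two_smul,
      ← ENNReal.ofReal_mul (by positivity)]
    apply ENNReal.ofReal_le_ofReal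
    apply le_of_eq; ring
  · exact volE.trans (measure_mono (Set.subset_inter hEE subE))
  · exact volF.trans (measure_mono (Set.subset_inter hFF subF))

lemma step3 {n : ℕ} {E F : Set (Pt n)} (hE : MeasurableSet E) (hF : MeasurableSet F)
    (e : OrthonormalBasis (Fin n) ℝ (Vec n)) (x0 y0 : Pt n) (r rs : Fin n → ℝ)
    (hr : ∀ j, 0 < r j) (hrs : ∀ j, 0 < rs j) {ρ : ℝ} (hρ : 0 < ρ) (hrr : ∀ j, r j * rs j = ρ)
    {R3 θ κ l : ℝ} (N : ℕ) (hN : R3 / θ ≤ N)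
    (hθ : 0 < θ) (hκ : 0 < κ) (hθκ : θ * (1 + 2 * n * R3) ≤ κ ^ 2)
    (hθκ' : θ ≤ κ) (hκ1 : κ ≤ 1) (hl : 0 < l)
    (h : ENNReal.ofReal l ≤ Lam (E ∩ bxE e x0.1 y0 (fun j => R3 * r j) (R3 * ρ))
      (F ∩ bxF e y0.1 x0 (fun j => R3 * rs j) (R3 * ρ))) :
    ∃ zb : Pt n × Pt n, IsBallParams n zb e (fun j => κ * r j) (fun j => κ * rs j) (κ ^ 2 * ρ) ∧
      volume (Prod.fst '' ballI n zb e (fun j => κ * r j) (fun j => κ * rs j) (κ ^ 2 * ρ)) ≤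
        ENNReal.ofReal (2 ^ (n + 1) * κ ^ (n + 2) * (∏ j, r j) * ρ) ∧
      volume (Prod.snd '' ballI n zb e (fun j => κ * r j) (fun j => κ * rs j) (κ ^ 2 * ρ)) ≤
        ENNReal.ofReal (2 ^ (n + 1) * κ ^ (n + 2) * (∏ j, rs j) * ρ) ∧
      ENNReal.ofReal (l / ((2 * N + 1) ^ (n + 1)) ^ 2 / (2 ^ n * ∏ j, rs j)) ≤
        volume (E ∩ Prod.fst '' ballI n zb e (fun j => κ * r j) (fun j => κ * rs j) (κ ^ 2 * ρ)) ∧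
      ENNReal.ofReal (l / ((2 * N + 1) ^ (n + 1)) ^ 2 / (2 ^ n * ∏ j, r j)) ≤
        volume (F ∩ Prod.snd '' ballI n zb e (fun j => κ * r j) (fun j => κ * rs j) (κ ^ 2 * ρ)) := by
  set gE : Option (Fin n) → Pt n → ℝ := fun o x =>
    o.elim (sg x y0 / (θ * ρ)) (fun j => ⟪x.1 - x0.1, e j⟫ / (θ * r j)) with hgE
  set gF : Option (Fin n) → Pt n → ℝ := fun o y =>
    o.elim (sg x0 y / (θ * ρ)) (fun j => ⟪y.1 - y0.1, e j⟫ / (θ * rs j)) with hgF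
  have hgEm : ∀ o, Measurable (gE o) := by
    rintro (_ | j)
    · exact (measurable_sg_left y0).div_const _
    · have : Measurable fun x : Pt n => ⟪x.1 - x0.1, e j⟫ := by fun_prop
      exact this.div_const _
  have hgFm : ∀ o, Measurable (gF o) := by
    rintro (_ | j)
    · exact (measurable_sg_right x0).div_const _
    · have : Measurable fun x : Pt n => ⟪x.1 - y0.1, e j⟫ := by fun_prop
      exact this.div_const _
  have hdiv : ∀ s w, 0 < w → |s| ≤ R3 * w → |s / (θ * w)| ≤ N := by
    intro s w hw hs
    rw [abs_div, abs_of_pos (mul_pos hθ hw)]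
    refine le_trans ?_ hN
    rw [div_le_div_iff₀ (by positivity) hθ]
    nlinarith
  set E1 := E ∩ bxE e x0.1 y0 (fun j => R3 * r j) (R3 * ρ) with hE1
  set F1 := F ∩ bxF e y0.1 x0 (fun j => R3 * rs j) (R3 * ρ) with hF1
  have hE1m : MeasurableSet E1 := hE.inter (measurableSet_bxE _ _ _ _ _)
  have hF1m : MeasurableSet F1 := hF.inter (measurableSet_bxF _ _ _ _ _)
  have cE := floor_cover gE N (E := E1) (by
    rintro x hx (_ | j)
    · exact hdiv _ _ hρ hx.2.2
    · exact hdiv _ _ (hr j) (hx.2.1 j))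
  have cF := floor_cover gF N (E := F1) (by
    rintro x hx (_ | j)
    · exact hdiv _ _ hρ hx.2.2
    · exact hdiv _ _ (hrs j) (hx.2.1 j))
  obtain ⟨u, v, huv⟩ := pigeon (ι := Option (Fin n) → ↥(Finset.Icc (-(N : ℤ)) N)) _ _ hE1m hF1m (fun u => measurableSet_floor gE hgEm (fun i => (u i : ℤ)))
    (fun u => measurableSet_floor gF hgFm (fun i => (u i : ℤ))) cE cF hl h
  have hcard : (Fintype.card (Option (Fin n) → ↥(Finset.Icc (-(N : ℤ)) N)) : ℝ) = (2 * N + 1) ^ (n + 1) := by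
    rw [Fintype.card_fun]
    simp only [Fintype.card_coe, Int.card_Icc, Fintype.card_option, Fintype.card_fin]
    have : ((N : ℤ) + 1 - -N).toNat = 2 * N + 1 := by omega
    rw [this]; push_cast; rfl
  rw [hcard] at huv
  refine step3a (R3 := R3) (hE1m.inter (measurableSet_floor gE hgEm (fun i => (u i : ℤ))))
    (hF1m.inter (measurableSet_floor gF hgFm (fun i => (v i : ℤ))))
    (Set.inter_subset_left.trans Set.inter_subset_left)
    (Set.inter_subset_left.trans Set.inter_subset_left) e x0 y0 r rs hr hrs hρ hrr hθ hκ hθκ hθκ' hκ1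
    (by positivity) ?_ ?_ (fun x hx => hx.1.2.1) (fun x hx => hx.1.2.1) huv
  · intro x hx x' hx'
    have hf : ∀ i, ⌊gE i x⌋ = ⌊gE i x'⌋ := fun i => (hx.2 i).trans (hx'.2 i).symm
    refine ⟨fun j => ?_, floor_close (mul_pos hθ hρ) (hf none)⟩
    have := floor_close (mul_pos hθ (hr j)) (hf (some j))
    rwa [← inner_sub_left, sub_sub_sub_cancel_right] at this
  · intro x hx x' hx'
    have hf : ∀ i, ⌊gF i x⌋ = ⌊gF i x'⌋ := fun i => (hx.2 i).trans (hx'.2 i).symm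
    refine ⟨fun j => ?_, floor_close (mul_pos hθ hρ) (hf none)⟩
    have := floor_close (mul_pos hθ (hrs j)) (hf (some j))
    rwa [← inner_sub_left, sub_sub_sub_cancel_right] at this


def cK (n : ℕ) : ℝ := 32 * (64 * n) ^ n
def cp (n : ℕ) (ε : ℝ) : ℝ := cK n / ε ^ (n + 2)
def cq (n : ℕ) (ε : ℝ) : ℝ := 2 ^ (n + 5) / ε ^ 2
def cA1 (n : ℕ) : ℝ := n * 2 ^ (n + 10) * cK n
def cR (n : ℕ) (ε : ℝ) : ℝ := cA1 n / ε ^ (n + 3)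
def ceta (n : ℕ) (ε : ℝ) : ℝ := 1 / (2 ^ (n + 4) * cR n ε ^ n * cq n ε)
def cR2 (n : ℕ) (ε : ℝ) : ℝ := n * 2 ^ (n + 5) * cR n ε ^ n * cq n ε / ε
def cR3 (n : ℕ) (ε : ℝ) : ℝ := 2 * n * cR n ε * (cR2 n ε + 2)
def cB (n : ℕ) : ℝ := 2 ^ (2 * n + 6) * cK n
def ckap (n : ℕ) (ε : ℝ) : ℝ := ε / cB n
def cthe (n : ℕ) (ε : ℝ) : ℝ := ckap n ε ^ 2 / (1 + 2 * n * cR3 n ε)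
def cN (n : ℕ) (ε : ℝ) : ℕ := ⌈cR3 n ε / cthe n ε⌉₊

lemma one_le_cK {n : ℕ} (hn : 0 < n) : 1 ≤ cK n := by
  have : (1 : ℝ) ≤ n := by exact_mod_cast hn
  have h : (1 : ℝ) ≤ (64 * n) ^ n := one_le_pow₀ (by linarith)
  unfold cK; linarith

lemma one_le_cA1 {n : ℕ} (hn : 0 < n) : 1 ≤ cA1 n := by
  have h1 : (1 : ℝ) ≤ n := by exact_mod_cast hn
  have h2 : (1 : ℝ) ≤ 2 ^ (n + 10) := one_le_pow₀ (by norm_num)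
  have h3 := one_le_cK hn
  unfold cA1
  exact one_le_mul_of_one_le_of_one_le (one_le_mul_of_one_le_of_one_le h1 h2) h3

lemma one_le_cB {n : ℕ} (hn : 0 < n) : 1 ≤ cB n := by
  have h2 : (1 : ℝ) ≤ 2 ^ (2 * n + 6) := one_le_pow₀ (by norm_num)
  exact one_le_mul_of_one_le_of_one_le h2 (one_le_cK hn)

lemma numeric {n : ℕ} (hn : 0 < n) : ∃ (c : ℝ) (M : ℕ), 0 < c ∧ 0 < M ∧ ∀ ε : ℝ, 0 < ε → ε ≤ 1 →
    c * ε ^ M ≤ (ε ^ 2 * ceta n ε /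
      (2 ^ (2 * n + 8) * cp n ε * ((2 * (cN n ε : ℝ) + 1) ^ (n + 1)) ^ 2)) ^ 2 := by
  have hK := one_le_cK hn
  have hA1 := one_le_cA1 hn
  have hB := one_le_cB hn
  have hn1 : (1 : ℝ) ≤ n := by exact_mod_cast hn
  set A1 := cA1 n
  set B := cB n
  set A2 : ℝ := n * 2 ^ (n + 5) * A1 ^ n * 2 ^ (n + 5) with hA2
  set m2 : ℕ := (n + 3) * n + 3 with hm2
  have hA2p : 0 < A2 := by positivity
  set A3 : ℝ := 2 * n * A1 * (A2 + 2) with hA3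
  set m3 : ℕ := n + 3 + m2 with hm3
  have hA3p : 0 < A3 := by positivity
  set A4 : ℝ := 2 * (A3 * (1 + 2 * n * A3) * B ^ 2) + 3 with hA4
  set m4 : ℕ := m3 + m3 + 2 with hm4
  have hA4p : 0 < A4 := by positivity
  set c0 : ℝ := 1 / (2 ^ (n + 4) * A1 ^ n * 2 ^ (n + 5)) / (2 ^ (2 * n + 8) * cK n * (A4 ^ (n + 1)) ^ 2)
  have hc0 : 0 < c0 := by positivity
  set m0 : ℕ := 2 + ((n + 3) * n + 2) + (n + 2) + m4 * (n + 1) * 2 with hm0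
  refine ⟨c0 ^ 2, m0 * 2, by positivity, by omega, fun ε hε hε1 => ?_⟩
  rw [pow_mul, ← mul_pow]
  have hR : cR n ε = A1 / ε ^ (n + 3) := rfl
  have hRp : 0 < cR n ε := by rw [hR]; positivity
  have hR2 : cR2 n ε = A2 / ε ^ m2 := by
    unfold cR2 cq; rw [hR, div_pow, ← pow_mul, hA2, hm2]
    field_simp
    ring
  have hR3 : cR3 n ε ≤ A3 / ε ^ m3 := by
    have h1 : cR2 n ε + 2 ≤ (A2 + 2) / ε ^ m2 := by
      rw [hR2, add_div]
      gcongr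
      rw [le_div_iff₀ (by positivity)]
      have : ε ^ m2 ≤ 1 := pow_le_one₀ hε.le hε1
      linarith
    unfold cR3
    calc _ ≤ 2 * n * cR n ε * ((A2 + 2) / ε ^ m2) := by gcongr
      _ = _ := by rw [hR, hA3, hm3, pow_add]; field_simp; ring
  have hR3p : 0 < cR3 n ε := by
    have : 0 < cR2 n ε := by rw [hR2]; positivity
    unfold cR3; positivity
  have hN : 2 * (cN n ε : ℝ) + 1 ≤ A4 / ε ^ m4 := by
    have hk : ckap n ε = ε / B := rfl
    have hkp : 0 < ckap n ε := by rw [hk]; positivity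
    have h1 : cR3 n ε / cthe n ε = cR3 n ε * (1 + 2 * n * cR3 n ε) * B ^ 2 / ε ^ 2 := by
      unfold cthe; rw [hk]; field_simp
    have h2 : (cN n ε : ℝ) ≤ cR3 n ε / cthe n ε + 1 :=
      (Nat.ceil_lt_add_one (by unfold cthe; positivity)).le
    have h3 : 1 + 2 * n * cR3 n ε ≤ (1 + 2 * n * A3) / ε ^ m3 := by
      rw [add_div]
      have : 1 ≤ 1 / ε ^ m3 := by
        rw [le_div_iff₀ (by positivity)]
        have : ε ^ m3 ≤ 1 := pow_le_one₀ hε.le hε1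
        linarith
      have h4 : 2 * n * cR3 n ε ≤ 2 * n * (A3 / ε ^ m3) := by gcongr
      rw [mul_div_assoc]
      linarith
    have h5 : cR3 n ε / cthe n ε ≤ A3 * (1 + 2 * n * A3) * B ^ 2 / ε ^ m4 := by
      rw [h1]
      calc _ ≤ (A3 / ε ^ m3) * ((1 + 2 * n * A3) / ε ^ m3) * B ^ 2 / ε ^ 2 := by gcongr
        _ = _ := by rw [hm4, pow_add, pow_add]; field_simp; rw [hm3]; ring
    have h6 : 3 ≤ 3 / ε ^ m4 := by
      rw [le_div_iff₀ (by positivity)]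
      have : ε ^ m4 ≤ 1 := pow_le_one₀ hε.le hε1
      linarith
    have h7 : A4 / ε ^ m4 = 2 * (A3 * (1 + 2 * n * A3) * B ^ 2 / ε ^ m4) + 3 / ε ^ m4 := by
      rw [hA4]; ring
    rw [h7]; linarith
  have hη : ceta n ε = 1 / (2 ^ (n + 4) * A1 ^ n * 2 ^ (n + 5)) * ε ^ ((n + 3) * n + 2) := by
    unfold ceta cq; rw [hR, div_pow, ← pow_mul, pow_add ε]
    field_simp
  have hp : cp n ε = cK n / ε ^ (n + 2) := rfl
  have hpp : 0 < cp n ε := by rw [hp]; positivity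
  have hηp : 0 < ceta n ε := by rw [hη]; positivity
  refine pow_le_pow_left₀ (by positivity) ?_ 2
  calc c0 * ε ^ m0 = ε ^ 2 * ceta n ε / (2 ^ (2 * n + 8) * cp n ε * ((A4 / ε ^ m4) ^ (n + 1)) ^ 2) := by
        rw [hη, hp, hm0, div_pow, div_pow, ← pow_mul ε m4, ← pow_mul ε, pow_add ε, pow_add ε, pow_add ε]
        simp only [c0]
        field_simp
    _ ≤ _ := by gcongr

lemma core0 {n : ℕ} (hn : 0 < n) {E F : Set (Pt n)} (hE : MeasurableSet E) (hF : MeasurableSet F)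
    {a b ρ ε : ℝ} (ha : 0 < a) (hb : 0 < b) (hρ : 0 < ρ) (hε : 0 < ε) (hab : ρ ^ (n + 2) = a * b)
    (hEa : volume E ≤ ENNReal.ofReal a) (hFb : volume F ≤ ENNReal.ofReal b)
    (hLam : ENNReal.ofReal (ε * ρ ^ (n + 1)) ≤ Lam E F) :
    ∃ (α β : ℝ) (x0 y0 : Pt n) (e : OrthonormalBasis (Fin n) ℝ (Vec n)) (rs : Fin n → ℝ) (A : Set (Vec n)),
      0 < α ∧ 0 < β ∧ a * ε = β * ρ ∧ b * ε = α * ρ ∧ α * β = ε ^ 2 * ρ ^ n ∧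
      sg x0 y0 = 0 ∧ (∀ j, 0 < rs j) ∧ MeasurableSet A ∧
      volume A ≠ ⊤ ∧ A ⊆ obox e y0.1 rs ∧ ENNReal.ofReal (α / 32) ≤ volume A ∧
      α ≤ 2 ^ (n + 5) * ∏ j, rs j ∧ (∏ j, rs j) ≤ cp n ε * α ∧
      ∀ y ∈ A, ENNReal.ofReal (β / 4) ≤ volume (psec 1 (ref1 E F α) (y, x0.2 + (-1) * ‖y - x0.1‖ ^ 2)) := by
  obtain ⟨x0, y0, e, rs, A, hxy, hrs, hAm, hAf, hAs, hAv, hP, hsec⟩ :=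
    step1 hn hE hF ha hb (L := ε * ρ ^ (n + 1)) (by positivity) hEa hFb hLam
  set α := ε * ρ ^ (n + 1) / a with hα
  set β := ε * ρ ^ (n + 1) / b with hβ
  have hα0 : 0 < α := by positivity
  have hβ0 : 0 < β := by positivity
  have h1 : a * ε = β * ρ := by
    rw [hβ, div_mul_eq_mul_div, eq_div_iff hb.ne']
    linear_combination (-ε) * hab
  have h2 : b * ε = α * ρ := by
    rw [hα, div_mul_eq_mul_div, eq_div_iff ha.ne']
    linear_combination (-ε) * hab
  have h3 : α * β = ε ^ 2 * ρ ^ n := by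
    have : α * β = ε ^ 2 * ρ ^ (2 * n + 2) / (a * b) := by rw [hα, hβ]; field_simp; ring
    rw [this, ← hab]; field_simp; ring
  have hP0 : 0 < ∏ j, rs j := Finset.prod_pos fun j _ => hrs j
  refine ⟨α, β, x0, y0, e, rs, A, hα0, hβ0, h1, h2, h3, ?_, hrs, hAm, hAf, hAs, hAv, ?_, ?_, hsec⟩
  · simp only [sg]; linarith
  · have h4 := hAv.trans (measure_mono hAs)
    rw [volume_obox e _ _ (fun j => (hrs j).le), ENNReal.ofReal_le_ofReal_iff
      (Finset.prod_nonneg fun j _ => by have := hrs j; positivity), Finset.prod_mul_distrib] at h4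
    simp only [Finset.prod_const, Finset.card_univ, Fintype.card_fin] at h4
    rw [pow_add]; linarith
  · have h5 : (∏ j, rs j) * α ^ n * β ≤ cK n * b ^ n := hP
    have h6 : (∏ j, rs j) * α ^ n * β * ε ^ n ≤ cK n * (α ^ n * ρ ^ n) := by
      rw [← mul_pow, ← h2, mul_pow, ← mul_assoc]
      gcongr
    unfold cp
    rw [div_mul_eq_mul_div, le_div_iff₀ (by positivity)]
    have h7 : ((∏ j, rs j) * ε ^ (n + 2)) * (α ^ n * ρ ^ n) ≤ (cK n * α) * (α ^ n * ρ ^ n) := by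
      have : ((∏ j, rs j) * ε ^ (n + 2)) * (α ^ n * ρ ^ n) = ((∏ j, rs j) * α ^ n * β * ε ^ n) * α := by
        linear_combination (-(∏ j, rs j)) * ε ^ n * α ^ n * h3
      rw [this]
      calc _ ≤ cK n * (α ^ n * ρ ^ n) * α := by gcongr
        _ = _ := by ring
    exact le_of_mul_le_mul_right h7 (by positivity)

lemma weak {n : ℕ} (hn : 0 < n) {E F : Set (Pt n)} (hE : MeasurableSet E) (hF : MeasurableSet F)
    {a b ρ ε : ℝ} (ha : 0 < a) (hb : 0 < b) (hρ : 0 < ρ) (hε : 0 < ε) (hab : ρ ^ (n + 2) = a * b)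
    (hEa : volume E ≤ ENNReal.ofReal a) (hFb : volume F ≤ ENNReal.ofReal b)
    (hLam : ENNReal.ofReal (ε * ρ ^ (n + 1)) ≤ Lam E F) : ε ≤ 2 ^ (n + 5) * cK n := by
  obtain ⟨α, β, x0, y0, e, rs, A, hα, hβ, -, -, -, -, hrs, -, -, -, -, h1, h2, -⟩ :=
    core0 hn hE hF ha hb hρ hε hab hEa hFb hLam
  have hK := one_le_cK hn
  have h3 : α * ε ^ (n + 2) ≤ α * (2 ^ (n + 5) * cK n) := by
    unfold cp at h2
    rw [div_mul_eq_mul_div, le_div_iff₀ (by positivity)] at h2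
    calc α * ε ^ (n + 2) ≤ (2 ^ (n + 5) * ∏ j, rs j) * ε ^ (n + 2) := by gcongr
      _ = 2 ^ (n + 5) * ((∏ j, rs j) * ε ^ (n + 2)) := by ring
      _ ≤ 2 ^ (n + 5) * (cK n * α) := by gcongr
      _ = _ := by ring
  have h4 := le_of_mul_le_mul_left h3 hα
  by_contra hcon
  push Not at hcon
  have h5 : (1 : ℝ) ≤ 2 ^ (n + 5) * cK n :=
    one_le_mul_of_one_le_of_one_le (one_le_pow₀ (by norm_num)) hK
  have h6 : ε ≤ ε ^ (n + 2) := le_self_pow₀ (by linarith) (by omega)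
  linarith

lemma core {n : ℕ} (hn : 0 < n) {E F : Set (Pt n)} (hE : MeasurableSet E) (hF : MeasurableSet F)
    {a b ρ ε : ℝ} (ha : 0 < a) (hb : 0 < b) (hρ : 0 < ρ) (hε : 0 < ε) (hε1 : ε ≤ 1)
    (hab : ρ ^ (n + 2) = a * b)
    (hEa : volume E = ENNReal.ofReal a) (hFb : volume F = ENNReal.ofReal b)
    (hLam : ENNReal.ofReal (ε * ρ ^ (n + 1)) ≤ Lam E F) :
    ∃ (zb : Pt n × Pt n) (e : Fin n → Vec n) (r rs : Fin n → ℝ) (ρ' : ℝ), IsBallParams n zb e r rs ρ' ∧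
      volume (Prod.fst '' ballI n zb e r rs ρ') ≤ volume E ∧
      volume (Prod.snd '' ballI n zb e r rs ρ') ≤ volume F ∧
      ENNReal.ofReal ((ε ^ 2 * ceta n ε /
        (2 ^ (2 * n + 8) * cp n ε * ((2 * (cN n ε : ℝ) + 1) ^ (n + 1)) ^ 2)) ^ 2) ≤
      (volume (E ∩ Prod.fst '' ballI n zb e r rs ρ') / volume E) *
        (volume (F ∩ Prod.snd '' ballI n zb e r rs ρ') / volume F) := by
  obtain ⟨α, β, x0, y0, e, rs, A, hα, hβ, haβ, hbα, hαβ, hinc, hrs, hAm, hAf, hAs, hAv, hP1, hP2, hsec⟩ :=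
    core0 hn hE hF ha hb hρ hε hab hEa.le hFb.le hLam
  have hK := one_le_cK hn
  have hA1 := one_le_cA1 hn
  have hB := one_le_cB hn
  have hn1 : (1 : ℝ) ≤ n := by exact_mod_cast hn
  have hP0 : 0 < ∏ j, rs j := Finset.prod_pos fun j _ => hrs j
  set r : Fin n → ℝ := fun j => ρ / rs j with hr
  have hr0 : ∀ j, 0 < r j := fun j => div_pos hρ (hrs j)
  have hrr : ∀ j, r j * rs j = ρ := fun j => div_mul_cancel₀ _ (hrs j).ne'
  have hQP : (∏ j, r j) * ∏ j, rs j = ρ ^ n := by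
    rw [← Finset.prod_mul_distrib]; simp [hrr]
  have hQ0 : 0 < ∏ j, r j := Finset.prod_pos fun j _ => hr0 j
  have hp : 0 < cp n ε := by unfold cp; positivity
  have hq : 0 < cq n ε := by unfold cq; positivity
  have hR1 : 1 ≤ cR n ε := by
    unfold cR
    rw [le_div_iff₀ (by positivity), one_mul]
    exact (pow_le_one₀ hε.le hε1).trans hA1
  have hR0 : 0 < cR n ε := by linarith
  have hR2 : 0 < cR2 n ε := by unfold cR2; positivity
  have hR3 : 0 < cR3 n ε := by unfold cR3; positivity
  have hη : 0 < ceta n ε := by unfold ceta; positivity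
  have hQ : ∏ j, r j ≤ cq n ε * β := by
    unfold cq
    rw [div_mul_eq_mul_div, le_div_iff₀ (by positivity)]
    have : (∏ j, r j) * ε ^ 2 * α ≤ 2 ^ (n + 5) * β * α := by
      calc (∏ j, r j) * ε ^ 2 * α ≤ (∏ j, r j) * ε ^ 2 * (2 ^ (n + 5) * ∏ j, rs j) := by gcongr
        _ = 2 ^ (n + 5) * (ε ^ 2 * ((∏ j, r j) * ∏ j, rs j)) := by ring
        _ = 2 ^ (n + 5) * β * α := by rw [hQP, ← hαβ]; ring
    exact le_of_mul_le_mul_right this hα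
  have hs2 := step2 (⟨0, hn⟩ : Fin n) hE hF e x0 y0 hinc r rs hr0 hrs hρ hrr hAm hAf hAs
    (a := a) (b := b) (α := α) (β := β) (ε := ε) (p := cp n ε) (q := cq n ε) (R := cR n ε)
    (R2 := cR2 n ε) (η := ceta n ε) ha hα hβ hε hp hq hAv hEa.le haβ hFb.le hbα hP2 hQ hR1
    (by unfold cR cp cA1; rw [pow_add, pow_add]; apply le_of_eq; field_simp; ring) hη
    (by unfold ceta; apply le_of_eq; rw [pow_add]; field_simp; norm_num) hR2
    (by unfold cR2; apply le_of_eq; rw [pow_add]; field_simp) hsec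
  have hκ : 0 < ckap n ε := by unfold ckap; positivity
  have hκ1 : ckap n ε ≤ 1 := by
    unfold ckap
    rw [div_le_one (by linarith)]; linarith
  have hθ : 0 < cthe n ε := by unfold cthe; positivity
  have hθκ : cthe n ε * (1 + 2 * n * cR3 n ε) = ckap n ε ^ 2 := by
    unfold cthe; exact div_mul_cancel₀ _ (by positivity)
  have hθκ' : cthe n ε ≤ ckap n ε := by
    have h1 : cthe n ε ≤ ckap n ε ^ 2 := by
      rw [← hθκ]
      have : 0 < n * cR3 n ε := by positivity
      nlinarith
    nlinarith
  have hl : 0 < α * β * ρ * ceta n ε / (2 ^ (n + 8) * cp n ε) := by positivity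
  obtain ⟨zb, hball, hv1, hv2, hw1, hw2⟩ := step3 hE hF e x0 y0 r rs hr0 hrs hρ hrr (R3 := cR3 n ε)
    (θ := cthe n ε) (κ := ckap n ε) (cN n ε) (Nat.le_ceil _) hθ hκ hθκ.le hθκ' hκ1 hl hs2
  have hκB : ckap n ε ^ (n + 2) ≤ ε ^ (n + 2) / cB n := by
    unfold ckap
    rw [div_pow]
    gcongr
    exact le_self_pow₀ hB (by omega)
  refine ⟨zb, e, _, _, _, hball, ?_, ?_, ?_⟩
  · rw [hEa]
    refine hv1.trans (ENNReal.ofReal_le_ofReal ?_)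
    calc _ ≤ 2 ^ (n + 1) * (ε ^ (n + 2) / cB n) * (cq n ε * β) * ρ := by gcongr
      _ = 2 ^ (n + 1) * (ε ^ (n + 2) / cB n) * cq n ε * (a * ε) := by rw [haβ]; ring
      _ = a * (ε ^ (n + 1) / cK n) := by
          unfold cB cq; field_simp; ring
      _ ≤ a * 1 := by
          gcongr
          rw [div_le_one (by linarith)]
          exact (pow_le_one₀ hε.le hε1).trans hK
      _ = a := mul_one a
  · rw [hFb]
    refine hv2.trans (ENNReal.ofReal_le_ofReal ?_)
    calc _ ≤ 2 ^ (n + 1) * (ε ^ (n + 2) / cB n) * (cp n ε * α) * ρ := by gcongr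
      _ = 2 ^ (n + 1) * (ε ^ (n + 2) / cB n) * cp n ε * (b * ε) := by rw [hbα]; ring
      _ = b * (ε / 2 ^ (n + 5)) := by
          unfold cB cp; field_simp; ring
      _ ≤ b * 1 := by
          gcongr
          rw [div_le_one (by positivity)]
          exact hε1.trans (one_le_pow₀ (by norm_num))
      _ = b := mul_one b
  · set G : ℝ := ((2 * (cN n ε : ℝ) + 1) ^ (n + 1)) ^ 2 with hG
    have hG0 : 0 < G := by positivity
    rw [hEa, hFb]
    set l := α * β * ρ * ceta n ε / (2 ^ (n + 8) * cp n ε) with hldef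
    have key : (ε ^ 2 * ceta n ε / (2 ^ (2 * n + 8) * cp n ε * G)) ^ 2 =
        (l / G / (2 ^ n * ∏ j, rs j) / a) * (l / G / (2 ^ n * ∏ j, r j) / b) := by
      have h1 : (l / G / (2 ^ n * ∏ j, rs j) / a) * (l / G / (2 ^ n * ∏ j, r j) / b) =
          (l / G) ^ 2 / ((2 ^ n) ^ 2 * ((∏ j, r j) * ∏ j, rs j) * (a * b)) := by
        field_simp
      rw [h1, hQP, ← hab, hldef, hαβ]
      field_simp
      ring
    rw [key, ENNReal.ofReal_mul (by positivity), ENNReal.ofReal_div_of_pos ha, ENNReal.ofReal_div_of_pos hb]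
    gcongr


lemma mainN (n : ℕ) (hn : 0 < n) :
    ∃ C δ : ℝ, 0 < C ∧ 0 < δ ∧
      ∀ (E Es : Set (Pt n)), MeasurableSet E → MeasurableSet Es →
        0 < volume E → volume E < ⊤ → 0 < volume Es → volume Es < ⊤ →
        incT n E Es ≤
          ENNReal.ofReal C * volume E ^ (((n + 1 : ℕ) : ℝ) / (((n + 1 : ℕ) : ℝ) + 1)) *
            volume Es ^ (((n + 1 : ℕ) : ℝ) / (((n + 1 : ℕ) : ℝ) + 1)) *
            ⨆ (zb : Pt n × Pt n) (e : Fin n → Vec n)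
              (r : Fin n → ℝ) (rs : Fin n → ℝ) (ρ : ℝ)
              (_ : IsBallParams n zb e r rs ρ)
              (_ : volume (Prod.fst '' ballI n zb e r rs ρ) ≤ volume E)
              (_ : volume (Prod.snd '' ballI n zb e r rs ρ) ≤ volume Es),
              ((volume (E ∩ Prod.fst '' ballI n zb e r rs ρ) / volume E) *
                (volume (Es ∩ Prod.snd '' ballI n zb e r rs ρ) / volume Es)) ^ δ := by
  obtain ⟨c, M, hc, hM, hnum⟩ := numeric hn
  have hK := one_le_cK hn
  set C0 : ℝ := 2 ^ (n + 5) * cK n with hC0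
  have hC01 : 1 ≤ C0 := one_le_mul_of_one_le_of_one_le (one_le_pow₀ (by norm_num)) hK
  have hMr : (0 : ℝ) < M := by exact_mod_cast hM
  set c1 : ℝ := c ^ (1 / (M : ℝ)) with hc1
  have hc10 : 0 < c1 := Real.rpow_pos_of_pos hc _
  refine ⟨C0 / c1, 1 / M, by positivity, by positivity, ?_⟩
  intro E F hE hF hE0 hEt hF0 hFt
  rw [incT_eq_Lam E hF]
  set s : ℝ := ((n + 1 : ℕ) : ℝ) / (((n + 1 : ℕ) : ℝ) + 1) with hs
  set S := ⨆ (zb : Pt n × Pt n) (e : Fin n → Vec n)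
              (r : Fin n → ℝ) (rs : Fin n → ℝ) (ρ : ℝ)
              (_ : IsBallParams n zb e r rs ρ)
              (_ : volume (Prod.fst '' ballI n zb e r rs ρ) ≤ volume E)
              (_ : volume (Prod.snd '' ballI n zb e r rs ρ) ≤ volume F),
              ((volume (E ∩ Prod.fst '' ballI n zb e r rs ρ) / volume E) *
                (volume (F ∩ Prod.snd '' ballI n zb e r rs ρ) / volume F)) ^ (1 / (M : ℝ)) with hS
  set a := (volume E).toReal with ha
  set b := (volume F).toReal with hb
  have ha0 : 0 < a := ENNReal.toReal_pos hE0.ne' hEt.ne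
  have hb0 : 0 < b := ENNReal.toReal_pos hF0.ne' hFt.ne
  have hEa : volume E = ENNReal.ofReal a := (ENNReal.ofReal_toReal hEt.ne).symm
  have hFb : volume F = ENNReal.ofReal b := (ENNReal.ofReal_toReal hFt.ne).symm
  set ρ : ℝ := (a * b) ^ (1 / ((n : ℝ) + 2)) with hρ
  have hρ0 : 0 < ρ := Real.rpow_pos_of_pos (by positivity) _
  have hn2 : (0 : ℝ) < (n : ℝ) + 2 := by positivity
  have hab : ρ ^ (n + 2) = a * b := by
    rw [hρ, ← Real.rpow_natCast, ← Real.rpow_mul (by positivity)]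
    push_cast
    rw [one_div_mul_cancel hn2.ne', Real.rpow_one]
  have hρs : ρ ^ (n + 1) = a ^ s * b ^ s := by
    rw [hρ, ← Real.rpow_natCast, ← Real.rpow_mul (by positivity), ← Real.mul_rpow ha0.le hb0.le]
    congr 1
    rw [hs]; push_cast
    rw [show (n : ℝ) + 1 + 1 = n + 2 by ring]; ring
  have hconst : ENNReal.ofReal (C0 / c1) * volume E ^ s * volume F ^ s =
      ENNReal.ofReal (C0 / c1 * ρ ^ (n + 1)) := by
    rw [hEa, hFb, ENNReal.ofReal_rpow_of_pos ha0, ENNReal.ofReal_rpow_of_pos hb0, mul_assoc,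
      ← ENNReal.ofReal_mul (by positivity), ← hρs, ← ENNReal.ofReal_mul (by positivity)]
  rw [hconst]
  refine le_of_forall_lt fun t ht => ?_
  obtain ⟨t', htt', ht'⟩ := exists_between ht
  refine htt'.trans_le ?_
  have htfin : t' ≠ ⊤ := (ht'.trans_le le_top).ne
  set L := t'.toReal with hL
  have htL : t' = ENNReal.ofReal L := (ENNReal.ofReal_toReal htfin).symm
  have hL0 : 0 < L := ENNReal.toReal_pos ((zero_le).trans_lt htt').ne' htfin
  set ε := L / ρ ^ (n + 1) with hε
  have hε0 : 0 < ε := by positivity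
  have hLε : L = ε * ρ ^ (n + 1) := by rw [hε]; field_simp
  have hLam : ENNReal.ofReal (ε * ρ ^ (n + 1)) ≤ Lam E F := by rw [← hLε, ← htL]; exact ht'.le
  have hεC : ε ≤ C0 := weak hn hE hF ha0 hb0 hρ0 hε0 hab hEa.le hFb.le hLam
  set ε1 := ε / C0 with hε1
  have hε10 : 0 < ε1 := by positivity
  have hε11 : ε1 ≤ 1 := by rw [hε1, div_le_one (by linarith)]; exact hεC
  have hε1ε : ε1 ≤ ε := div_le_self hε0.le hC01
  have hLam1 : ENNReal.ofReal (ε1 * ρ ^ (n + 1)) ≤ Lam E F :=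
    (ENNReal.ofReal_le_ofReal (by gcongr)).trans hLam
  obtain ⟨zb, e, r, rs, ρ', hball, h1, h2, h3⟩ :=
    core hn hE hF ha0 hb0 hρ0 hε10 hε11 hab hEa hFb hLam1
  have h4 := (ENNReal.ofReal_le_ofReal (hnum ε1 hε10 hε11)).trans h3
  have h5 : ENNReal.ofReal (c1 * ε1) ≤ S := by
    have h6 := ENNReal.rpow_le_rpow h4 (by positivity : (0 : ℝ) ≤ 1 / M)
    have h7 : ENNReal.ofReal (c * ε1 ^ M) ^ (1 / (M : ℝ)) = ENNReal.ofReal (c1 * ε1) := by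
      rw [ENNReal.ofReal_rpow_of_pos (by positivity), Real.mul_rpow hc.le (by positivity),
        ← Real.rpow_natCast, ← Real.rpow_mul hε10.le, mul_one_div_cancel hMr.ne', Real.rpow_one]
    rw [h7] at h6
    refine h6.trans ?_
    rw [hS]
    exact le_iSup_of_le zb <| le_iSup_of_le e <| le_iSup_of_le r <| le_iSup_of_le rs <|
      le_iSup_of_le ρ' <| le_iSup_of_le hball <| le_iSup_of_le h1 <| le_iSup_of_le h2 le_rfl
  calc t' = ENNReal.ofReal (C0 / c1 * ρ ^ (n + 1)) * ENNReal.ofReal (c1 * ε1) := by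
        rw [← ENNReal.ofReal_mul (by positivity), htL, hLε, hε1]
        congr 1
        field_simp
    _ ≤ _ := by gcongr

/-- reformulation of the main theorem as a refined restricted weak
type bound, with a supremum over all admissible balls `ℬ` with `|π(ℬ)| ≤ |E|`
and `|π*(ℬ)| ≤ |E*|`. -/
theorem stmt4 (d : ℕ) (hd : 2 ≤ d) :
    ∃ C δ : ℝ, 0 < C ∧ 0 < δ ∧
      ∀ (E Es : Set (Pt (d - 1))), MeasurableSet E → MeasurableSet Es →
        0 < volume E → volume E < ⊤ → 0 < volume Es → volume Es < ⊤ →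
        incT (d - 1) E Es ≤
          ENNReal.ofReal C * volume E ^ ((d : ℝ) / (d + 1)) *
            volume Es ^ ((d : ℝ) / (d + 1)) *
            ⨆ (zb : Pt (d - 1) × Pt (d - 1)) (e : Fin (d - 1) → Vec (d - 1))
              (r : Fin (d - 1) → ℝ) (rs : Fin (d - 1) → ℝ) (ρ : ℝ)
              (hball : IsBallParams (d - 1) zb e r rs ρ)
              (h1 : volume (Prod.fst '' ballI (d - 1) zb e r rs ρ) ≤ volume E)
              (h2 : volume (Prod.snd '' ballI (d - 1) zb e r rs ρ) ≤ volume Es),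
              ((volume (E ∩ Prod.fst '' ballI (d - 1) zb e r rs ρ) / volume E) *
                (volume (Es ∩ Prod.snd '' ballI (d - 1) zb e r rs ρ) / volume Es)) ^ δ := by
  obtain ⟨n, rfl⟩ : ∃ n, d = n + 1 := ⟨d - 1, by omega⟩
  exact mainN n (by omega)
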